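/- arXiv:1605.08288 — 7 statements merged into one kernel-verified Lean document; each statement's English description precedes it below -/
import Mathlib

section
/- Let E = (E, ≤, #) be an event structure and c a configuration of E. Let #(c) = {e' : there exists e ∈ c with e # e'}, and let E∖c be the event structure whose set of events is E ∖ (c ∪ #(c)) with the restrictions of ≤ and # to this set. Then the map c' ↦ c' ∖ c is an order isomorphism from the principal filter F(c) = {c' ∈ D(E) : c ⊆ c'}, ordered by inclusion, onto the domain D(E∖c), ordered by inclusion. -/
/-- An event structure `(E, ≤, #)`. -/
structure EventStructure where
  E : Type
  le : E → E → Prop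
  le_refl : ∀ e, le e e
  le_trans : ∀ e₁ e₂ e₃, le e₁ e₂ → le e₂ e₃ → le e₁ e₃
  le_antisymm : ∀ e₁ e₂, le e₁ e₂ → le e₂ e₁ → e₁ = e₂
  finite_below : ∀ e, {e' | le e' e}.Finite
  conflict : E → E → Prop
  conflict_irrefl : ∀ e, ¬ conflict e e
  conflict_symm : ∀ e₁ e₂, conflict e₁ e₂ → conflict e₂ e₁
  conflict_hereditary : ∀ e₁ e₂ e₃, conflict e₁ e₂ → le e₂ e₃ → conflict e₁ e₃

/-- A configuration: a finite, downward-closed, conflict-free set of events. -/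
def EventStructure.IsConfig (ES : EventStructure) (c : Set ES.E) : Prop :=
  c.Finite ∧ (∀ e ∈ c, ∀ e', ES.le e' e → e' ∈ c) ∧
    ∀ e ∈ c, ∀ e' ∈ c, ¬ ES.conflict e e'

/-- `#(c)`: the set of events in conflict with some event of `c`. -/
def EventStructure.conflictSet (ES : EventStructure) (c : Set ES.E) : Set ES.E :=
  {e' | ∃ e ∈ c, ES.conflict e e'}

/-- The events of the event structure `E ∖ c` rooted at the configuration `c`:
`E ∖ (c ∪ #(c))`. -/
def EventStructure.rootedEvents (ES : EventStructure) (c : Set ES.E) : Set ES.E :=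
  {e | e ∉ c ∧ e ∉ ES.conflictSet c}

/-- A configuration of the rooted event structure `E ∖ c`, whose events are
`E ∖ (c ∪ #(c))` and whose causality and conflict relations are the restrictions
of those of `E`. -/
def EventStructure.IsRootedConfig (ES : EventStructure) (c d : Set ES.E) : Prop :=
  d ⊆ ES.rootedEvents c ∧ d.Finite ∧
    (∀ e ∈ d, ∀ e' ∈ ES.rootedEvents c, ES.le e' e → e' ∈ d) ∧
    ∀ e ∈ d, ∀ e' ∈ d, ¬ ES.conflict e e'

/-- The map `c' ↦ c' ∖ c` is an order isomorphism from the principal filter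
`F(c) = {c' ∈ D(E) : c ⊆ c'}` (ordered by inclusion) onto the domain of the rooted
event structure `E ∖ c` (ordered by inclusion). -/
theorem rooted_domain_iso (ES : EventStructure) (c : Set ES.E) (hc : ES.IsConfig c) :
    Set.BijOn (fun c' => c' \ c)
        {c' | ES.IsConfig c' ∧ c ⊆ c'} {d | ES.IsRootedConfig c d} ∧
      ∀ c₁ ∈ {c' | ES.IsConfig c' ∧ c ⊆ c'}, ∀ c₂ ∈ {c' | ES.IsConfig c' ∧ c ⊆ c'},
        (c₁ ⊆ c₂ ↔ c₁ \ c ⊆ c₂ \ c) := by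
  have key : ∀ c₁ ∈ {c' | ES.IsConfig c' ∧ c ⊆ c'}, ∀ c₂ ∈ {c' | ES.IsConfig c' ∧ c ⊆ c'},
        (c₁ ⊆ c₂ ↔ c₁ \ c ⊆ c₂ \ c) := by
    rintro c₁ ⟨_, h₁⟩ c₂ ⟨_, h₂⟩
    constructor
    · intro h x hx
      exact ⟨h hx.1, hx.2⟩
    · intro h x hx
      by_cases hxc : x ∈ c
      · exact h₂ hxc
      · exact (h ⟨hx, hxc⟩).1
  refine ⟨⟨?_, ?_, ?_⟩, key⟩
  · rintro c' ⟨⟨hf, hd, hn⟩, hcc⟩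
    refine ⟨?_, hf.subset Set.diff_subset, ?_, ?_⟩
    · rintro x ⟨hx, hxc⟩
      refine ⟨hxc, ?_⟩
      rintro ⟨e, he, hconf⟩
      exact hn e (hcc he) x hx hconf
    · rintro e ⟨he, _⟩ e' he' hle
      exact ⟨hd e he e' hle, he'.1⟩
    · rintro e ⟨he, _⟩ e' ⟨he', _⟩
      exact hn e he e' he'
  · intro c₁ h₁ c₂ h₂ h
    exact Set.Subset.antisymm ((key c₁ h₁ c₂ h₂).2 (le_of_eq h))
      ((key c₂ h₂ c₁ h₁).2 (le_of_eq h.symm))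
  · rintro d ⟨hr, hf, hd, hn⟩
    obtain ⟨cf, cd, cn⟩ := hc
    refine ⟨c ∪ d, ⟨⟨cf.union hf, ?_, ?_⟩, Set.subset_union_left⟩, ?_⟩
    · rintro e (he | he) e' hle
      · exact Or.inl (cd e he e' hle)
      · by_cases hec : e' ∈ c
        · exact Or.inl hec
        · refine Or.inr (hd e he e' ⟨hec, ?_⟩ hle)
          rintro ⟨a, ha, hconf⟩
          exact (hr he).2 ⟨a, ha, ES.conflict_hereditary _ _ _ hconf hle⟩
    · rintro e (he | he) e' (he' | he') hconf
      · exact cn e he e' he' hconf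
      · exact (hr he').2 ⟨e, he, hconf⟩
      · exact (hr he).2 ⟨e', he', ES.conflict_symm _ _ hconf⟩
      · exact hn e he e' he' hconf
    · ext x
      constructor
      · rintro ⟨hx | hx, hxc⟩
        · exact absurd hx hxc
        · exact hx
      · intro hx
        exact ⟨Or.inr hx, (hr hx).1⟩
end

section
/- For any median graph G and any vertex v of G, there exist an event structure E and a bijection ψ from the vertices of G onto the configurations of E such that ψ(v) = ∅ and, for all vertices x and y of G: x and y are adjacent in G with d(v,x) < d(v,y) if and only if ψ(y) = ψ(x) ∪ {e} for some event e ∉ ψ(x). (Every pointed median graph is isomorphic to the Hasse diagram of the domain of an event structure.) -/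
/-- The interval `I(u,v)` in a graph. -/
def gInterval {V : Type} (G : SimpleGraph V) (u v : V) : Set V :=
  {w | G.dist u w + G.dist w v = G.dist u v}

/-- A median graph: a connected graph in which every triple of vertices has a
unique median. -/
def IsMedianGraph {V : Type} (G : SimpleGraph V) : Prop :=
  G.Connected ∧ ∀ x y z : V, ∃! m : V,
    m ∈ gInterval G x y ∧ m ∈ gInterval G y z ∧ m ∈ gInterval G z x

namespace MedEv

variable {V : Type} {G : SimpleGraph V}

/-- Halfspace of vertices closer to `a` than to `b`. -/
def W (G : SimpleGraph V) (a b : V) : Set V := {x | G.dist x a < G.dist x b}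

theorem step (hc : G.Connected) {x z : V} (h : x ≠ z) :
    ∃ w, G.Adj x w ∧ G.dist w z + 1 = G.dist x z := by
  obtain ⟨p, hp⟩ := hc.exists_walk_length_eq_dist x z
  cases p with
  | nil => exact absurd rfl h
  | @cons _ w _ hw q =>
    refine ⟨w, hw, ?_⟩
    have h1 := SimpleGraph.dist_le q
    have h2 : G.dist x z ≤ G.dist x w + G.dist w z := hc.dist_triangle
    have h3 := SimpleGraph.dist_eq_one_iff_adj.2 hw
    simp at hp
    omega

theorem crossing (hc : G.Connected) (S : Set V) : ∀ (n : ℕ) (x z : V), G.dist x z = n →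
    x ∈ S → z ∉ S → ∃ u u', G.Adj u u' ∧ u ∈ S ∧ u' ∉ S ∧
      G.dist x u + 1 + G.dist u' z = G.dist x z := by
  intro n
  induction n with
  | zero =>
    intro x z h hx hz
    rw [hc.dist_eq_zero_iff] at h
    exact absurd (h ▸ hx) hz
  | succ n ih =>
    intro x z h hx hz
    have hne : x ≠ z := by rintro rfl; exact hz hx
    obtain ⟨w, hw, hd⟩ := step hc hne
    by_cases hwS : w ∈ S
    · obtain ⟨u, u', ha, hu, hu', he⟩ := ih w z (by omega) hwS hz
      refine ⟨u, u', ha, hu, hu', ?_⟩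
      have h1 : G.dist x u ≤ G.dist x w + G.dist w u := hc.dist_triangle
      have h3 := SimpleGraph.dist_eq_one_iff_adj.2 hw
      have h4 : G.dist x z ≤ G.dist x u + G.dist u z := hc.dist_triangle
      have h5 : G.dist u z ≤ G.dist u u' + G.dist u' z := hc.dist_triangle
      have h6 := SimpleGraph.dist_eq_one_iff_adj.2 ha
      omega
    · refine ⟨x, w, hw, hx, hwS, ?_⟩
      have : G.dist x x = 0 := by simp
      omega

theorem med (hG : IsMedianGraph G) (x y z : V) : ∃ m,
    G.dist x m + G.dist m y = G.dist x y ∧ G.dist y m + G.dist m z = G.dist y z ∧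
    G.dist z m + G.dist m x = G.dist z x := (hG.2 x y z).exists

theorem med_unique (hG : IsMedianGraph G) (x y z m n : V)
    (h1 : G.dist x m + G.dist m y = G.dist x y) (h2 : G.dist y m + G.dist m z = G.dist y z)
    (h3 : G.dist z m + G.dist m x = G.dist z x)
    (h4 : G.dist x n + G.dist n y = G.dist x y) (h5 : G.dist y n + G.dist n z = G.dist y z)
    (h6 : G.dist z n + G.dist n x = G.dist z x) : m = n :=
  (hG.2 x y z).unique ⟨h1, h2, h3⟩ ⟨h4, h5, h6⟩

theorem bip (hG : IsMedianGraph G) {a b : V} (h : G.Adj a b) (x : V) :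
    G.dist x a + 1 = G.dist x b ∨ G.dist x b + 1 = G.dist x a := by
  obtain ⟨m, h1, h2, h3⟩ := med hG a b x
  have hab := SimpleGraph.dist_eq_one_iff_adj.2 h
  have e1 := G.dist_comm (u := a) (v := b)
  have e2 := G.dist_comm (u := x) (v := b)
  have e3 := G.dist_comm (u := m) (v := x)
  rcases Nat.eq_zero_or_pos (G.dist a m) with h0 | h0
  · rw [hG.1.dist_eq_zero_iff] at h0
    subst h0
    left; omega
  · have h0 : G.dist m b = 0 := by omega
    rw [hG.1.dist_eq_zero_iff] at h0
    subst h0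
    right; omega

theorem mem_W {a b x : V} : x ∈ W G a b ↔ G.dist x a < G.dist x b := Iff.rfl

theorem not_mem_W (hG : IsMedianGraph G) {a b : V} (h : G.Adj a b) {x : V} :
    x ∉ W G a b ↔ x ∈ W G b a := by
  rw [mem_W, mem_W]
  have := bip hG h x
  omega

theorem self_mem_W {a b : V} (h : G.Adj a b) : a ∈ W G a b := by
  rw [mem_W, SimpleGraph.dist_eq_one_iff_adj.2 h]; simp

theorem square_sub (hG : IsMedianGraph G) {x x' m y : V} (h1 : G.Adj x x') (h2 : G.Adj x' m)
    (h3 : G.Adj m y) (h4 : G.Adj y x) (hxm : x ≠ m) (hxy : x' ≠ y) {u : V}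
    (hu : u ∈ W G x x') : u ∈ W G y m := by
  by_contra hn
  rw [not_mem_W hG h3.symm] at hn
  rw [mem_W] at hu hn
  have b1 := bip hG h1 u
  have b2 := bip hG h2 u
  have b3 := bip hG h3 u
  have b4 := bip hG h4 u
  have a1 := SimpleGraph.dist_eq_one_iff_adj.2 h1
  have a2 := SimpleGraph.dist_eq_one_iff_adj.2 h2
  have a3 := SimpleGraph.dist_eq_one_iff_adj.2 h3
  have a4 := SimpleGraph.dist_eq_one_iff_adj.2 h4
  have c1 := G.dist_comm (u := x) (v := x')
  have c2 := G.dist_comm (u := x') (v := m)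
  have c3 := G.dist_comm (u := m) (v := y)
  have c4 := G.dist_comm (u := y) (v := x)
  have d1 := G.dist_comm (u := u) (v := x)
  have d2 := G.dist_comm (u := u) (v := x')
  have d3 := G.dist_comm (u := u) (v := m)
  have d4 := G.dist_comm (u := u) (v := y)
  have t : G.dist x' y ≤ G.dist x' x + G.dist x y := hG.1.dist_triangle
  have p := hG.1.pos_dist_of_ne hxy
  have b5 := bip hG h4 x'
  exact hxm (med_unique hG x' y u x m (by omega) (by omega) (by omega) (by omega) (by omega)
    (by omega))

theorem square (hG : IsMedianGraph G) {x x' m y : V} (h1 : G.Adj x x') (h2 : G.Adj x' m)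
    (h3 : G.Adj m y) (h4 : G.Adj y x) (hxm : x ≠ m) (hxy : x' ≠ y) :
    W G x x' = W G y m := by
  ext u
  exact ⟨square_sub hG h1 h2 h3 h4 hxm hxy,
    square_sub hG h3.symm h2.symm h1.symm h4.symm hxy.symm hxm.symm⟩

theorem theta_aux (hG : IsMedianGraph G) {a b : V} (hab : G.Adj a b) : ∀ (n : ℕ) (x x' : V),
    G.dist x a = n → G.Adj x x' → x ∈ W G a b → x' ∉ W G a b → W G x x' = W G a b := by
  intro n
  induction n with
  | zero =>
    intro x x' h hx hxa hxb
    rw [hG.1.dist_eq_zero_iff] at h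
    subst h
    rw [not_mem_W hG hab, mem_W, G.dist_comm (u := x') (v := x),
      SimpleGraph.dist_eq_one_iff_adj.2 hx] at hxb
    have : G.dist x' b = 0 := by omega
    rw [hG.1.dist_eq_zero_iff] at this
    rw [this]
  | succ n ih =>
    intro x x' h hx hxa hxb
    have hne : x ≠ a := by rintro rfl; simp at h
    obtain ⟨y, hy, hyd⟩ := step hG.1 hne
    rw [not_mem_W hG hab] at hxb
    have hxa' := hxa
    have hxb' := hxb
    rw [mem_W] at hxa hxb
    have b1 := bip hG hab x
    have b2 := bip hG hab x'
    have b3 := bip hG hab y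
    have b4 := bip hG hx a
    have b5 := bip hG hx b
    have b6 := bip hG hy b
    have b7 := bip hG hx y
    have cx := G.dist_comm (u := x) (v := a)
    have cx' := G.dist_comm (u := x') (v := a)
    have cxb := G.dist_comm (u := x) (v := b)
    have cxb' := G.dist_comm (u := x') (v := b)
    have cyb := G.dist_comm (u := y) (v := b)
    have ax := SimpleGraph.dist_eq_one_iff_adj.2 hx
    have ay := SimpleGraph.dist_eq_one_iff_adj.2 hy
    have cyx := G.dist_comm (u := y) (v := x)
    obtain ⟨m, m1, m2, m3⟩ := med hG y x' b
    have hyx' : x' ≠ y := by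
      rintro rfl
      omega
    have p := hG.1.pos_dist_of_ne hyx'
    have cp := G.dist_comm (u := x') (v := y)
    have cm1 := G.dist_comm (u := m) (v := y)
    have cm2 := G.dist_comm (u := m) (v := x')
    have cm3 := G.dist_comm (u := m) (v := b)
    have hmy : G.Adj m y := SimpleGraph.dist_eq_one_iff_adj.1 (by omega)
    have hxm : G.Adj x' m := SimpleGraph.dist_eq_one_iff_adj.1 (by omega)
    have bm := bip hG hab m
    have t : G.dist x' a ≤ G.dist x' m + G.dist m a := hG.1.dist_triangle
    have hmb : m ∉ W G a b := by
      rw [mem_W]; omega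
    have hya : y ∈ W G a b := by
      rw [mem_W]; omega
    have hxnm : x ≠ m := by rintro rfl; exact hmb hxa'
    rw [square hG hx hxm hmy hy.symm hxnm hyx']
    exact ih y m (by omega) hmy.symm hya hmb

theorem theta (hG : IsMedianGraph G) {a b x x' : V} (hab : G.Adj a b) (hx : G.Adj x x')
    (h1 : x ∈ W G a b) (h2 : x' ∉ W G a b) : W G x x' = W G a b :=
  theta_aux hG hab _ x x' rfl hx h1 h2

/-- Geodesic convexity. -/
def Conv (G : SimpleGraph V) (S : Set V) : Prop :=
  ∀ x ∈ S, ∀ y ∈ S, ∀ z, G.dist x z + G.dist z y = G.dist x y → z ∈ S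

theorem conv_W (hG : IsMedianGraph G) {a b : V} (hab : G.Adj a b) : Conv G (W G a b) := by
  intro x hx y hy z hz
  by_contra hn
  obtain ⟨u, u', ha, hu, hu', he⟩ := crossing hG.1 _ _ x z rfl hx hn
  rw [← theta hG hab ha hu hu', mem_W] at hy
  have t1 : G.dist x y ≤ G.dist x u + G.dist u y := hG.1.dist_triangle
  have t2 : G.dist u' y ≤ G.dist u' z + G.dist z y := hG.1.dist_triangle
  have c1 := G.dist_comm (u := y) (v := u)
  have c2 := G.dist_comm (u := y) (v := u')
  omega

theorem conv_inter {S T : Set V} (hS : Conv G S) (hT : Conv G T) : Conv G (S ∩ T) :=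
  fun x hx y hy z hz => ⟨hS x hx.1 y hy.1 z hz, hT x hx.2 y hy.2 z hz⟩

theorem helly3 (hG : IsMedianGraph G) {A B C : Set V} (hA : Conv G A) (hB : Conv G B)
    (hC : Conv G C) (h1 : (A ∩ B).Nonempty) (h2 : (B ∩ C).Nonempty) (h3 : (C ∩ A).Nonempty) :
    ((C ∩ A) ∩ B).Nonempty := by
  obtain ⟨x, hxA, hxB⟩ := h1
  obtain ⟨y, hyB, hyC⟩ := h2
  obtain ⟨z, hzC, hzA⟩ := h3
  obtain ⟨m, m1, m2, m3⟩ := med hG x y z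
  exact ⟨m, ⟨hC y hyC z hzC m m2, hA z hzA x hxA m m3⟩, hB x hxB y hyB m m1⟩

theorem helly (hG : IsMedianGraph G) {s : Set (Set V)} (hs : s.Finite) :
    (∀ A ∈ s, Conv G A) → (∀ A ∈ s, ∀ B ∈ s, (A ∩ B).Nonempty) →
    ∀ C : Set V, Conv G C → C.Nonempty → (∀ A ∈ s, (C ∩ A).Nonempty) →
    ∃ x ∈ C, ∀ A ∈ s, x ∈ A := by
  induction s, hs using Set.Finite.induction_on with
  | empty =>
    intro _ _ C _ hC _
    obtain ⟨x, hx⟩ := hC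
    exact ⟨x, hx, by simp⟩
  | @insert A s _ _ ih =>
    intro hcv hp C hC hne hCA
    have hA := Set.mem_insert A s
    obtain ⟨x, hx, hxs⟩ := ih (fun B hB => hcv B (Set.mem_insert_of_mem _ hB))
      (fun B hB D hD => hp B (Set.mem_insert_of_mem _ hB) D (Set.mem_insert_of_mem _ hD))
      (C ∩ A) (conv_inter hC (hcv A hA)) (hCA A hA)
      (fun B hB => by
        have hB' := Set.mem_insert_of_mem A hB
        refine helly3 hG (hcv A hA) (hcv B hB') hC (hp A hA B hB') ?_ (hCA A hA)
        rw [Set.inter_comm]; exact hCA B hB')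
    refine ⟨x, hx.1, ?_⟩
    intro B hB
    rcases Set.mem_insert_iff.1 hB with rfl | hB
    · exact hx.2
    · exact hxs B hB

/-- Events: halfspaces avoiding the basepoint. -/
def IsEv (G : SimpleGraph V) (v : V) (S : Set V) : Prop :=
  (∃ a b, G.Adj a b ∧ S = W G a b) ∧ v ∉ S

theorem ev_theta (hG : IsMedianGraph G) {v : V} {S : Set V} (hS : IsEv G v S) {x x' : V}
    (h : G.Adj x x') (h1 : x ∈ S) (h2 : x' ∉ S) : S = W G x x' := by
  obtain ⟨⟨a, b, hab, rfl⟩, -⟩ := hS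
  exact (theta hG hab h h1 h2).symm

theorem fin_aux (hG : IsMedianGraph G) (v : V) : ∀ (n : ℕ) (x : V), G.dist x v = n →
    {S | IsEv G v S ∧ x ∈ S}.Finite := by
  intro n
  induction n with
  | zero =>
    intro x h
    rw [hG.1.dist_eq_zero_iff] at h
    subst h
    convert Set.finite_empty
    ext S
    simp only [Set.mem_ofPred_eq, Set.mem_empty_iff_false, iff_false]
    exact fun h => h.1.2 h.2
  | succ n ih =>
    intro x h
    have hne : x ≠ v := by rintro rfl; simp at h
    obtain ⟨w, hw, hd⟩ := step hG.1 hne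
    refine ((ih w (by omega)).insert (W G x w)).subset ?_
    rintro S ⟨hS, hx⟩
    by_cases hwS : w ∈ S
    · exact Or.inr ⟨hS, hwS⟩
    · exact Or.inl (ev_theta hG hS hw hx hwS)

theorem minimal_edge (hG : IsMedianGraph G) {v y : V} {K : Set V} (hK : IsEv G v K) (hy : y ∈ K)
    (hmin : ∀ L, IsEv G v L → y ∈ L → L ⊆ K → L = K) :
    ∃ p, G.Adj y p ∧ p ∉ K ∧ K = W G y p := by
  classical
  have hex : ∃ n, ∃ p, p ∉ K ∧ G.dist y p + G.dist p v = G.dist y v ∧ G.dist y p = n :=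
    ⟨_, v, hK.2, by simp, rfl⟩
  obtain ⟨p, hpK, hpi, hpn⟩ := Nat.find_spec hex
  have hleast : ∀ q, q ∉ K → G.dist y q + G.dist q v = G.dist y v →
      G.dist y p ≤ G.dist y q := by
    intro q h1 h2
    rw [hpn]
    exact Nat.find_min' hex ⟨q, h1, h2, rfl⟩
  have hpy : p ≠ y := by rintro rfl; exact hpK hy
  obtain ⟨q, hq, hqd⟩ := step hG.1 hpy
  have c1 := G.dist_comm (u := q) (v := y)
  have c2 := G.dist_comm (u := p) (v := y)
  have a1 := SimpleGraph.dist_eq_one_iff_adj.2 hq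
  have c3 := G.dist_comm (u := p) (v := q)
  have t1 : G.dist q v ≤ G.dist q p + G.dist p v := hG.1.dist_triangle
  have t2 : G.dist y v ≤ G.dist y q + G.dist q v := hG.1.dist_triangle
  have hqK : q ∈ K := by
    by_contra hn
    have := hleast q hn (by omega)
    omega
  have hKq : K = W G q p := ev_theta hG hK hq.symm hqK hpK
  by_cases hqy : q = y
  · subst hqy
    exact ⟨p, hq.symm, hpK, hKq⟩
  exfalso
  obtain ⟨r, hr, hrd⟩ := step hG.1 hqy
  have a2 := SimpleGraph.dist_eq_one_iff_adj.2 hr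
  have c4 := G.dist_comm (u := q) (v := r)
  have c5 := G.dist_comm (u := r) (v := y)
  have t3 : G.dist r v ≤ G.dist r q + G.dist q v := hG.1.dist_triangle
  have t4 : G.dist y v ≤ G.dist y r + G.dist r v := hG.1.dist_triangle
  have c6 := G.dist_comm (u := v) (v := r)
  have c7 := G.dist_comm (u := v) (v := q)
  have hqr : q ∉ W G r q := by rw [mem_W]; simp
  have hLev : IsEv G v (W G r q) := by
    refine ⟨⟨r, q, hr.symm, rfl⟩, ?_⟩
    rw [mem_W]; omega
  have hyL : y ∈ W G r q := by rw [mem_W]; omega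
  have hnot : ¬ W G r q ⊆ K := by
    intro hs
    have := hmin _ hLev hyL hs
    rw [this] at hqr
    exact hqr hqK
  obtain ⟨u, huL, huK⟩ := Set.not_subset.1 hnot
  obtain ⟨m, m1, m2, m3⟩ := med hG r p u
  have hmL : m ∈ W G r q := by
    refine conv_W hG hr.symm u huL r (self_mem_W hr.symm) m m3
  have hmK : m ∉ K := by
    rw [hKq, not_mem_W hG hq.symm] at huK hpK ⊢
    exact conv_W hG hq p hpK u huK m m2
  have t5 : G.dist r p ≤ G.dist r q + G.dist q p := hG.1.dist_triangle
  have t6 : G.dist y p ≤ G.dist y r + G.dist r p := hG.1.dist_triangle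
  have t7 : G.dist y m ≤ G.dist y r + G.dist r m := hG.1.dist_triangle
  have t8 : G.dist m v ≤ G.dist m p + G.dist p v := hG.1.dist_triangle
  have t9 : G.dist y v ≤ G.dist y m + G.dist m v := hG.1.dist_triangle
  have h10 := hleast m hmK (by omega)
  have hmp : G.dist m p = 0 := by omega
  rw [hG.1.dist_eq_zero_iff] at hmp
  subst hmp
  have c8 := G.dist_comm (u := m) (v := r)
  rw [mem_W] at hmL
  omega

/-- The event structure of halfspaces. -/
def ES (hG : IsMedianGraph G) (v : V) : EventStructure where
  E := {S : Set V // IsEv G v S}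
  le S T := T.1 ⊆ S.1
  le_refl _ := subset_rfl
  le_trans _ _ _ h1 h2 := h2.trans h1
  le_antisymm _ _ h1 h2 := Subtype.ext (h2.antisymm h1)
  finite_below := by
    rintro ⟨S, ⟨a, b, hab, rfl⟩, hv⟩
    refine Set.Finite.of_finite_image (f := Subtype.val) ?_ Subtype.val_injective.injOn
    refine (fin_aux hG v _ a rfl).subset ?_
    rintro _ ⟨T, hT, rfl⟩
    exact ⟨T.2, hT (self_mem_W hab)⟩
  conflict S T := ¬ (S.1 ∩ T.1).Nonempty
  conflict_irrefl := by
    rintro ⟨S, ⟨a, b, hab, rfl⟩, hv⟩ h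
    exact h ⟨a, self_mem_W hab, self_mem_W hab⟩
  conflict_symm := by
    intro S T h
    rwa [Set.inter_comm]
  conflict_hereditary := by
    intro S T U h hle hn
    exact h (hn.mono (Set.inter_subset_inter_right _ hle))

/-- The configuration of a vertex. -/
def psi (hG : IsMedianGraph G) (v x : V) : Set (ES hG v).E :=
  {S : {S : Set V // IsEv G v S} | x ∈ S.1}

theorem separate (hG : IsMedianGraph G) (v : V) {x y z : V} (h : G.Adj x z)
    (hd : G.dist z y + 1 = G.dist x y) :
    ∃ S : {S : Set V // IsEv G v S}, ¬ (x ∈ S.1 ↔ y ∈ S.1) := by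
  have c1 := G.dist_comm (u := z) (v := y)
  have c2 := G.dist_comm (u := x) (v := y)
  have hy : y ∈ W G z x := by rw [mem_W]; omega
  by_cases hv : v ∈ W G x z
  · refine ⟨⟨W G z x, ⟨z, x, h.symm, rfl⟩, (not_mem_W hG h.symm).2 hv⟩, ?_⟩
    intro hh
    exact (not_mem_W hG h.symm).2 (self_mem_W h) (hh.2 hy)
  · refine ⟨⟨W G x z, ⟨x, z, h, rfl⟩, hv⟩, ?_⟩
    intro hh
    exact (not_mem_W hG h).2 hy (hh.1 (self_mem_W h))

theorem psi_inj (hG : IsMedianGraph G) (v : V) : Function.Injective (psi hG v) := by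
  intro x y h
  by_contra hne
  obtain ⟨z, hz, hd⟩ := step hG.1 hne
  obtain ⟨S, hS⟩ := separate hG v hz hd
  exact hS (Set.ext_iff.1 h S)

theorem psi_finite (hG : IsMedianGraph G) (v x : V) : (psi hG v x).Finite := by
  refine Set.Finite.of_finite_image (f := Subtype.val) ?_ Subtype.val_injective.injOn
  refine (fin_aux hG v _ x rfl).subset ?_
  rintro _ ⟨T, hT, rfl⟩
  exact ⟨T.2, hT⟩

theorem surj (hG : IsMedianGraph G) (v : V) (c : Set (ES hG v).E) (hc : (ES hG v).IsConfig c) :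
    ∃ x, psi hG v x = c := by
  classical
  obtain ⟨hf, hdown, hcf⟩ := hc
  have hne : ∃ x, ∀ S ∈ c, x ∈ S.1 := by
    obtain ⟨x, -, hx⟩ := helly hG (hf.image Subtype.val)
      (by
        rintro _ ⟨⟨S, ⟨a, b, hab, rfl⟩, hv⟩, hT, rfl⟩
        exact conv_W hG hab)
      (by
        rintro _ ⟨S, hS, rfl⟩ _ ⟨T, hT, rfl⟩
        exact not_not.1 (hcf S hS T hT))
      Set.univ (fun _ _ _ _ _ _ => trivial) ⟨v, trivial⟩
      (by
        rintro _ ⟨S, hS, rfl⟩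
        rw [Set.univ_inter]
        exact (not_not.1 (hcf S hS S hS)).left)
    exact ⟨x, fun S hS => hx _ ⟨S, hS, rfl⟩⟩
  have hex : ∃ n, ∃ y, (∀ S ∈ c, y ∈ S.1) ∧ G.dist v y = n := by
    obtain ⟨x, hx⟩ := hne
    exact ⟨_, x, hx, rfl⟩
  obtain ⟨y, hyc, hyn⟩ := Nat.find_spec hex
  have hleast : ∀ q, (∀ S ∈ c, q ∈ S.1) → G.dist v y ≤ G.dist v q := by
    intro q h1
    rw [hyn]
    exact Nat.find_min' hex ⟨q, h1, rfl⟩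
  refine ⟨y, Set.Subset.antisymm ?_ (fun S hS => hyc S hS)⟩
  intro H hH
  obtain ⟨K, hKH, hKmin⟩ := (fin_aux hG v _ y rfl).exists_le_minimal
    (show H.1 ∈ {S | IsEv G v S ∧ y ∈ S} from ⟨H.2, hH⟩)
  obtain ⟨⟨hKe, hyK⟩, hKm⟩ := hKmin
  obtain ⟨p, hp, hpK, hKp⟩ := minimal_edge hG hKe hyK
    (fun L hL hyL hLK => Set.Subset.antisymm hLK (hKm ⟨hL, hyL⟩ hLK))
  have hKc : (⟨K, hKe⟩ : {S : Set V // IsEv G v S}) ∈ c := by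
    by_contra hn
    have h1 := hleast p (by
      intro S hS
      by_contra hpS
      have h2 := ev_theta hG S.2 hp (hyc S hS) hpS
      apply hn
      have : S = (⟨K, hKe⟩ : {S : Set V // IsEv G v S}) := Subtype.ext (h2.trans hKp.symm)
      rwa [← this])
    have h2 := hKe.2
    rw [hKp, not_mem_W hG hp, mem_W] at h2
    omega
  exact hdown _ hKc H hKH

theorem edges (hG : IsMedianGraph G) (v x y : V) :
    (G.Adj x y ∧ G.dist v x < G.dist v y) ↔
      ∃ e ∉ psi hG v x, psi hG v y = insert e (psi hG v x) := by
  have key : ∀ x y, G.Adj x y → G.dist v x < G.dist v y → ∃ e : {S : Set V // IsEv G v S},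
      e.1 = W G y x := by
    intro x y h hd
    refine ⟨⟨W G y x, ⟨y, x, h.symm, rfl⟩, ?_⟩, rfl⟩
    rw [mem_W]; omega
  constructor
  · rintro ⟨h, hd⟩
    obtain ⟨e, he⟩ := key x y h hd
    have hx : x ∉ e.1 := by rw [he, mem_W]; simp
    have hy : y ∈ e.1 := by rw [he]; exact self_mem_W h.symm
    have hv : v ∈ W G x y := hd
    refine ⟨e, hx, ?_⟩
    ext S
    constructor
    · intro hS
      by_cases hxS : x ∈ S.1
      · exact Or.inr hxS
      · left
        exact Subtype.ext ((ev_theta hG S.2 h.symm hS hxS).trans he.symm)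
    · rintro (rfl | hS)
      · exact hy
      · by_contra hyS
        have h1 := ev_theta hG S.2 h hS hyS
        have h2 := S.2.2
        rw [h1] at h2
        exact h2 hv
  · rintro ⟨e, he, hins⟩
    have hiff : ∀ S : {S : Set V // IsEv G v S}, y ∈ S.1 ↔ S = e ∨ x ∈ S.1 :=
      fun S => Set.ext_iff.1 hins S
    have hye : y ∈ e.1 := (hiff e).2 (Or.inl rfl)
    have hxe : x ∉ e.1 := he
    have hne : x ≠ y := by rintro rfl; exact hxe hye
    obtain ⟨z, hz, hzd⟩ := step hG.1 hne
    have c1 := G.dist_comm (u := z) (v := y)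
    have c2 := G.dist_comm (u := x) (v := y)
    -- the edge from x to z crosses e
    have hyz : y ∈ W G z x := by rw [mem_W]; omega
    have hyz' : y ∉ W G x z := by rw [mem_W]; omega
    have hev : e.1 = W G z x := by
      by_cases hv : v ∈ W G z x
      · exfalso
        have h1 : v ∉ W G x z := (not_mem_W hG hz).2 hv
        exact hyz' ((hiff ⟨W G x z, ⟨x, z, hz, rfl⟩, h1⟩).2 (Or.inr (self_mem_W hz)))
      · rcases (hiff ⟨W G z x, ⟨z, x, hz.symm, rfl⟩, hv⟩).1 hyz with h | h
        · rw [← h]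
        · exact absurd h ((not_mem_W hG hz.symm).2 (self_mem_W hz))
    have hve := e.2.2
    rw [hev, not_mem_W hG hz.symm] at hve
    have hzy : z = y := by
      apply psi_inj hG v
      ext S
      change z ∈ S.1 ↔ y ∈ S.1
      refine Iff.trans ?_ (hiff S).symm
      constructor
      · intro hzS
        by_cases hxS : x ∈ S.1
        · exact Or.inr hxS
        · exact Or.inl (Subtype.ext ((ev_theta hG S.2 hz.symm hzS hxS).trans hev.symm))
      · rintro (rfl | hxS)
        · rw [hev]; exact self_mem_W hz.symm
        · by_contra hzS
          have h1 := ev_theta hG S.2 hz hxS hzS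
          exact S.2.2 (h1 ▸ hve)
    subst hzy
    exact ⟨hz, hve⟩

end MedEv

/-- Every pointed median graph is isomorphic to the Hasse diagram of the domain of
an event structure: for any median graph `G` and any basepoint `v` there are an
event structure `E` and a bijection `ψ` from the vertices of `G` onto the
configurations of `E` with `ψ(v) = ∅`, such that `x` and `y` are adjacent with
`d(v,x) < d(v,y)` iff `ψ(y)` is obtained from `ψ(x)` by adding a single event. -/
theorem pointed_median_graph_is_event_domain {V : Type} (G : SimpleGraph V)
    (hG : IsMedianGraph G) (v : V) :
    ∃ (ES : EventStructure) (ψ : V → Set ES.E),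
      (∀ x : V, ES.IsConfig (ψ x)) ∧
      Function.Injective ψ ∧
      (∀ c : Set ES.E, ES.IsConfig c → ∃ x : V, ψ x = c) ∧
      ψ v = ∅ ∧
      ∀ x y : V,
        (G.Adj x y ∧ G.dist v x < G.dist v y) ↔ ∃ e ∉ ψ x, ψ y = insert e (ψ x) := by
  refine ⟨MedEv.ES hG v, MedEv.psi hG v, ?_, MedEv.psi_inj hG v, MedEv.surj hG v, ?_,
    MedEv.edges hG v⟩
  · intro x
    refine ⟨MedEv.psi_finite hG v x, ?_, ?_⟩
    · intro e he e' hle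
      exact hle he
    · intro e he e' he' hcon
      exact hcon ⟨x, he, he'⟩
  · ext S
    simp only [Set.mem_empty_iff_false, iff_false]
    exact S.2.2
end

section
/- Let G be a median graph and let S be the vertex set of a connected subgraph of G. Then S is convex if and only if S is locally convex, i.e., I(x,y) ⊆ S for any two vertices x, y ∈ S having a common neighbor in S. -/
/-- A set of vertices is convex if it contains the interval between any two of its
elements. -/
def ConvexSet {V : Type} (G : SimpleGraph V) (S : Set V) : Prop :=
  ∀ u ∈ S, ∀ v ∈ S, gInterval G u v ⊆ S

theorem aux_nbr {V : Type} {G : SimpleGraph V} (hc : G.Connected) {y w : V} (h : w ≠ y) :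
    ∃ v, G.Adj y v ∧ G.dist w v + 1 = G.dist w y := by
  obtain ⟨p, hp⟩ := hc.exists_walk_length_eq_dist y w
  cases p with
  | nil => exact absurd rfl h
  | @cons _ v _ hyv q =>
    refine ⟨v, hyv, ?_⟩
    have h1 := SimpleGraph.dist_le q
    have h2 := hc.dist_triangle (u := y) (v := v) (w := w)
    have h3 : G.dist y v = 1 := SimpleGraph.dist_eq_one_iff_adj.2 hyv
    rw [SimpleGraph.Walk.length_cons] at hp
    rw [SimpleGraph.dist_comm (u := w) (v := v), SimpleGraph.dist_comm (u := w) (v := y)]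
    omega

theorem aux_bip {V : Type} {G : SimpleGraph V} (hG : IsMedianGraph G) (x : V) {y z : V}
    (h : G.Adj y z) : G.dist x y + 1 = G.dist x z ∨ G.dist x z + 1 = G.dist x y := by
  obtain ⟨hc, hm⟩ := hG
  obtain ⟨m, ⟨h1, h2, h3⟩, -⟩ := hm x y z
  simp only [gInterval, Set.mem_setOf_eq] at h1 h2 h3
  have h4 : G.dist y z = 1 := SimpleGraph.dist_eq_one_iff_adj.2 h
  have c1 := SimpleGraph.dist_comm (G := G) (u := z) (v := m)
  have c2 := SimpleGraph.dist_comm (G := G) (u := m) (v := x)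
  have c3 := SimpleGraph.dist_comm (G := G) (u := z) (v := x)
  have c4 := SimpleGraph.dist_comm (G := G) (u := m) (v := y)
  omega

theorem aux_step {V : Type} {G : SimpleGraph V} (hG : IsMedianGraph G) (S : Set V)
    (hS : ∀ x ∈ S, ∀ y ∈ S, (∃ z ∈ S, G.Adj x z ∧ G.Adj z y) → gInterval G x y ⊆ S) (x : V) :
    ∀ k : ℕ, ∀ y' y : V, G.dist x y' = k → G.Adj y' y → G.dist x y = k + 1 → y ∈ S →
      gInterval G x y' ⊆ S → gInterval G x y ⊆ S := by
  intro k
  induction k with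
  | zero =>
    intro y' y h0 ha h1 hy hI w hw
    have hc := hG.1
    have hx : x = y' := hc.dist_eq_zero_iff.1 h0
    subst hx
    simp only [gInterval, Set.mem_setOf_eq] at hw
    by_cases hwy : G.dist w y = 0
    · rw [hc.dist_eq_zero_iff.1 hwy]; exact hy
    · have : G.dist x w = 0 := by omega
      rw [← hc.dist_eq_zero_iff.1 this]
      exact hI (by simp [gInterval])
  | succ k ih =>
    intro y' y h0 ha h1 hy hI w hw
    have hc := hG.1
    by_cases hwy : w = y
    · rw [hwy]; exact hy
    obtain ⟨v, hyv, hv⟩ := aux_nbr hc hwy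
    simp only [gInterval, Set.mem_setOf_eq] at hw
    have t1 := hc.dist_triangle (u := x) (v := w) (w := v)
    have hyv1 : G.dist y v = 1 := SimpleGraph.dist_eq_one_iff_adj.2 hyv
    have hvy1 : G.dist v y = 1 := SimpleGraph.dist_eq_one_iff_adj.2 hyv.symm
    have hy'y1 : G.dist y' y = 1 := SimpleGraph.dist_eq_one_iff_adj.2 ha
    have t2 := hc.dist_triangle (u := x) (v := v) (w := y)
    have hwv : w ∈ gInterval G x v := by
      simp only [gInterval, Set.mem_setOf_eq]; omega
    by_cases hvy' : v = y'
    · subst hvy'; exact hI hwv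
    have d0 : G.dist v y' ≠ 0 := fun h => hvy' (hc.dist_eq_zero_iff.1 h)
    have d1 : G.dist v y' ≠ 1 := fun h => by
      have := aux_bip hG x (SimpleGraph.dist_eq_one_iff_adj.1 h)
      omega
    have d2 := hc.dist_triangle (u := v) (v := y) (w := y')
    have cy : G.dist y y' = 1 := SimpleGraph.dist_eq_one_iff_adj.2 ha.symm
    obtain ⟨u, ⟨m1, m2, m3⟩, -⟩ := hG.2 x v y'
    simp only [gInterval, Set.mem_setOf_eq] at m1 m2 m3
    have c1 := SimpleGraph.dist_comm (G := G) (u := y') (v := u)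
    have c2 := SimpleGraph.dist_comm (G := G) (u := u) (v := x)
    have c3 := SimpleGraph.dist_comm (G := G) (u := y') (v := x)
    have c4 := SimpleGraph.dist_comm (G := G) (u := u) (v := v)
    have huv : G.dist u v = 1 := by omega
    have huy' : G.dist u y' = 1 := by omega
    have hxu : G.dist x u = k := by omega
    have hu : u ∈ S := hI (by simp only [gInterval, Set.mem_setOf_eq]; omega)
    have hy' : y' ∈ S := hI (by simp [gInterval])
    have t3 := hc.dist_triangle (u := x) (v := u) (w := y)
    have t4 := hc.dist_triangle (u := u) (v := v) (w := y)
    have hvS : v ∈ S := hS u hu y hy ⟨y', hy', SimpleGraph.dist_eq_one_iff_adj.1 huy', ha⟩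
      (by simp only [gInterval, Set.mem_setOf_eq]; omega)
    refine ih u v hxu (SimpleGraph.dist_eq_one_iff_adj.1 huv) (by omega) hvS ?_ hwv
    intro a hA
    apply hI
    simp only [gInterval, Set.mem_setOf_eq] at hA ⊢
    have t5 := hc.dist_triangle (u := a) (v := u) (w := y')
    have t6 := hc.dist_triangle (u := x) (v := a) (w := y')
    omega

theorem aux_walk {V : Type} {G : SimpleGraph V} (hG : IsMedianGraph G) (S : Set V)
    (hS : ∀ x ∈ S, ∀ y ∈ S, (∃ z ∈ S, G.Adj x z ∧ G.Adj z y) → gInterval G x y ⊆ S)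
    {y x : S} (p : (G.induce S).Walk y x) : gInterval G x.1 y.1 ⊆ S := by
  have hc := hG.1
  induction p with
  | @nil u =>
    intro w hw
    simp only [gInterval, Set.mem_setOf_eq, SimpleGraph.dist_self] at hw
    have : G.dist u.1 w = 0 := by omega
    rw [← hc.dist_eq_zero_iff.1 this]
    exact u.2
  | @cons y y' x h q ih =>
    have ha : G.Adj y.1 y'.1 := h
    rcases aux_bip hG x.1 ha with h1 | h1
    · intro w hw
      apply ih
      simp only [gInterval, Set.mem_setOf_eq] at hw ⊢
      have hd : G.dist y.1 y'.1 = 1 := SimpleGraph.dist_eq_one_iff_adj.2 ha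
      have t5 := hc.dist_triangle (u := w) (v := y.1) (w := y'.1)
      have t6 := hc.dist_triangle (u := x.1) (v := w) (w := y'.1)
      omega
    · exact aux_step hG S hS x.1 _ y'.1 y.1 rfl ha.symm h1.symm y.2 ih

/-- Local characterization of convexity in median graphs: a connected subgraph `S`
of a median graph is convex iff it is locally convex, i.e., `I(x,y) ⊆ S` for any
two vertices `x, y ∈ S` having a common neighbor in `S`. -/
theorem convex_iff_locally_convex {V : Type} (G : SimpleGraph V)
    (hG : IsMedianGraph G) (S : Set V) (hconn : (G.induce S).Connected) :
    ConvexSet G S ↔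
      ∀ x ∈ S, ∀ y ∈ S, (∃ z ∈ S, G.Adj x z ∧ G.Adj z y) → gInterval G x y ⊆ S := by
  constructor
  · intro h x hx y hy _
    exact h x hx y hy
  · intro hS u hu v hv
    obtain ⟨p⟩ := hconn.preconnected ⟨v, hv⟩ ⟨u, hu⟩
    exact aux_walk hG S hS p
end

section
/- Let (G,o) be a directed median graph and v a vertex of G. Then: (a) for all x, y ∈ F_o(v,G), x ⪯_o y holds if and only if x ≤_v y, i.e., the restriction of the order ≺_o to F_o(v,G) coincides with the restriction of the canonical basepoint order ≤_v to F_o(v,G); and (b) for any vertex u ∈ F_o(v,G), the principal filter F_o(u,G) is contained in F_o(v,G) and F_o(u,G) = {x ∈ F_o(v,G) : u ≤_v x}. -/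
/-- An orientation of the edges of a graph: each edge gets exactly one direction. -/
structure GraphOrientation {V : Type} (G : SimpleGraph V) where
  dir : V → V → Prop
  adj_of_dir : ∀ u v, dir u v → G.Adj u v
  total : ∀ u v, G.Adj u v → dir u v ∨ dir v u
  asymm : ∀ u v, dir u v → ¬ dir v u

/-- An orientation is admissible (defines a directed median graph) if opposite
edges of every 4-cycle receive the same direction. -/
def IsAdmissible {V : Type} (G : SimpleGraph V) (o : GraphOrientation G) : Prop :=
  ∀ a b c d : V, G.Adj a b → G.Adj b c → G.Adj c d → G.Adj d a → a ≠ c → b ≠ d →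
    (o.dir a b ↔ o.dir d c)

/-- The principal filter `F_o(v,G) = {x : v = x or v ≺_o x}` of a vertex `v`,
where `≺_o` is the partial order generated by the directed edges. -/
def oFilter {V : Type} {G : SimpleGraph V} (o : GraphOrientation G) (v : V) : Set V :=
  {x | Relation.ReflTransGen o.dir v x}

theorem med_adj_dist {V : Type} {G : SimpleGraph V} (hG : IsMedianGraph G) (v : V) {a b : V}
    (h : G.Adj a b) : G.dist v a + 1 = G.dist v b ∨ G.dist v b + 1 = G.dist v a := by
  obtain ⟨m, ⟨h1, h2, h3⟩, -⟩ := hG.2 a b v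
  simp only [gInterval, Set.mem_setOf_eq] at h1 h2 h3
  have hab : G.dist a b = 1 := SimpleGraph.dist_eq_one_iff_adj.2 h
  rw [hab] at h1
  have e1 : G.dist b a = 1 := by rw [SimpleGraph.dist_comm]; exact hab
  have c1 : G.dist a v = G.dist v a := SimpleGraph.dist_comm
  have c2 : G.dist b v = G.dist v b := SimpleGraph.dist_comm
  have c3 : G.dist m v = G.dist v m := SimpleGraph.dist_comm
  have c4 : G.dist a m = G.dist m a := SimpleGraph.dist_comm
  have c5 : G.dist b m = G.dist m b := SimpleGraph.dist_comm
  omega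

theorem med_quad {V : Type} {G : SimpleGraph V} (hG : IsMedianGraph G) (v : V) {x y z : V}
    (hx : G.Adj x z) (hy : G.Adj y z) (hne : x ≠ y) (hd : G.dist v x = G.dist v y) :
    ∃ m, G.Adj m x ∧ G.Adj m y ∧ G.dist v m + 1 = G.dist v x := by
  obtain ⟨m, ⟨h1, h2, h3⟩, -⟩ := hG.2 x y v
  simp only [gInterval, Set.mem_setOf_eq] at h1 h2 h3
  have t : G.dist x y ≤ G.dist x z + G.dist z y := hG.1.dist_triangle
  have e1 : G.dist x z = 1 := SimpleGraph.dist_eq_one_iff_adj.2 hx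
  have e2 : G.dist z y = 1 := SimpleGraph.dist_eq_one_iff_adj.2 hy.symm
  have e3 : G.dist x y ≠ 0 := fun h => hne (hG.1.dist_eq_zero_iff.1 h)
  have e4 : G.dist x y ≠ 1 := fun h => by
    have := med_adj_dist hG v (SimpleGraph.dist_eq_one_iff_adj.1 h)
    omega
  have c1 : G.dist x v = G.dist v x := SimpleGraph.dist_comm
  have c2 : G.dist y v = G.dist v y := SimpleGraph.dist_comm
  have c3 : G.dist m v = G.dist v m := SimpleGraph.dist_comm
  have c4 : G.dist x m = G.dist m x := SimpleGraph.dist_comm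
  have c5 : G.dist y m = G.dist m y := SimpleGraph.dist_comm
  refine ⟨m, SimpleGraph.dist_eq_one_iff_adj.1 ?_, SimpleGraph.dist_eq_one_iff_adj.1 ?_, ?_⟩ <;>
    omega

theorem filt_pred {V : Type} {G : SimpleGraph V} (hG : IsMedianGraph G)
    (o : GraphOrientation G) (ho : IsAdmissible G o) {v y : V}
    (h : Relation.ReflTransGen o.dir v y) :
    ∀ z, G.Adj z y → G.dist v z + 1 = G.dist v y →
      o.dir z y ∧ Relation.ReflTransGen o.dir v z := by
  induction h with
  | refl => intro z _ hz; simp at hz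
  | @tail p y hvp hpy ih =>
    intro z hz hd
    have hadj := o.adj_of_dir _ _ hpy
    rcases med_adj_dist hG v hadj with e | e
    · by_cases hne : p = z
      · subst hne; exact ⟨hpy, hvp⟩
      · obtain ⟨m, hmp, hmz, hm⟩ := med_quad hG v hadj hz hne (by omega)
        obtain ⟨d1, r1⟩ := ih m hmp hm
        have hmy : m ≠ y := by rintro rfl; omega
        have d2 : o.dir m z := (ho m z y p hmz hz hadj.symm hmp.symm hmy (Ne.symm hne)).2 hpy
        exact ⟨(ho m p y z hmp hadj hz.symm hmz.symm hmy hne).1 d1, r1.tail d2⟩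
    · exact absurd (ih y hadj.symm e).1 (o.asymm _ _ hpy)

theorem filt_step {V : Type} {G : SimpleGraph V} (hG : IsMedianGraph G)
    (o : GraphOrientation G) (ho : IsAdmissible G o) {v y z : V}
    (h : Relation.ReflTransGen o.dir v y) (hyz : o.dir y z) :
    G.dist v z = G.dist v y + 1 := by
  have hadj := o.adj_of_dir _ _ hyz
  rcases med_adj_dist hG v hadj with e | e
  · exact e.symm
  · exact absurd (filt_pred hG o ho h z hadj.symm e).1 (o.asymm _ _ hyz)

theorem filt_fwd {V : Type} {G : SimpleGraph V} (hG : IsMedianGraph G)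
    (o : GraphOrientation G) (ho : IsAdmissible G o) {v x y : V}
    (h : Relation.ReflTransGen o.dir v x) (hxy : Relation.ReflTransGen o.dir x y) :
    x ∈ gInterval G v y := by
  simp only [gInterval, Set.mem_setOf_eq]
  induction hxy with
  | refl => simp
  | tail h1 h2 ih =>
    rw [filt_step hG o ho h1 h2, filt_step hG o ho (h.trans h1) h2]
    omega

theorem filt_bwd {V : Type} {G : SimpleGraph V} (hG : IsMedianGraph G)
    (o : GraphOrientation G) (ho : IsAdmissible G o) {v x : V} (n : ℕ) :
    ∀ y, Relation.ReflTransGen o.dir v y → x ∈ gInterval G v y → G.dist x y = n →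
    Relation.ReflTransGen o.dir x y := by
  simp only [gInterval, Set.mem_setOf_eq]
  induction n with
  | zero =>
    intro y _ _ h0
    rw [hG.1.dist_eq_zero_iff.1 h0]
  | succ n ih =>
    intro y hy hI hn
    obtain ⟨w, hw⟩ := hG.1.exists_walk_length_eq_dist y x
    have hyx : G.dist y x = n + 1 := by rw [SimpleGraph.dist_comm]; exact hn
    cases w with
    | nil => simp at hyx
    | @cons _ z _ ha w' =>
      rw [SimpleGraph.Walk.length_cons] at hw
      have hle : G.dist z x ≤ w'.length := SimpleGraph.dist_le w'
      have c1 : G.dist z x = G.dist x z := SimpleGraph.dist_comm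
      have t : G.dist v z ≤ G.dist v x + G.dist x z := hG.1.dist_triangle
      have b1 := med_adj_dist hG v ha
      have b2 := med_adj_dist hG x ha
      obtain ⟨d, r⟩ := filt_pred hG o ho hy z ha.symm (by omega)
      exact (ih z r (by omega) (by omega)).tail d

/-- In a directed median graph `(G,o)`: (a) on the principal filter `F_o(v,G)`, the
order `⪯_o` coincides with the canonical basepoint order `≤_v` (where `x ≤_v y` iff
`x ∈ I(v,y)`); (b) for `u ∈ F_o(v,G)`, the filter `F_o(u,G)` is contained in
`F_o(v,G)` and coincides with the principal filter of `u` with respect to `≤_v`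
restricted to `F_o(v,G)`. -/
theorem oFilter_orders {V : Type} (G : SimpleGraph V) (hG : IsMedianGraph G)
    (o : GraphOrientation G) (ho : IsAdmissible G o) (v : V) :
    (∀ x ∈ oFilter o v, ∀ y ∈ oFilter o v,
      (Relation.ReflTransGen o.dir x y ↔ x ∈ gInterval G v y)) ∧
    (∀ u ∈ oFilter o v,
      oFilter o u ⊆ oFilter o v ∧
      oFilter o u = {x ∈ oFilter o v | u ∈ gInterval G v x}) := by
  refine ⟨fun x hx y hy => ⟨fun h => filt_fwd hG o ho hx h,
    fun h => filt_bwd hG o ho _ y hy h rfl⟩, fun u hu => ⟨fun x hx => Relation.ReflTransGen.trans hu hx, ?_⟩⟩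
  ext x
  exact ⟨fun hx => ⟨Relation.ReflTransGen.trans hu hx, filt_fwd hG o ho hu hx⟩,
    fun hx => filt_bwd hG o ho _ x hx.1 hx.2 rfl⟩
end

section
/- For any vertex v of a directed median graph (G,o), the poset (F_o(v,G), ⪯_o) is order-isomorphic to the domain (D(E), ⊆) of some event structure E. -/
open Relation

section MedianAux

variable {V : Type} {G : SimpleGraph V}

lemma mg_tri (hG : IsMedianGraph G) (a b c : V) : G.dist a c ≤ G.dist a b + G.dist b c :=
  hG.1.dist_triangle

lemma mg_eq (hG : IsMedianGraph G) {a b : V} (h : G.dist a b = 0) : a = b :=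
  (hG.1.dist_eq_zero_iff).1 h

lemma mg_one {a b : V} (h : G.Adj a b) : G.dist a b = 1 :=
  SimpleGraph.dist_eq_one_iff_adj.2 h

lemma mg_med (hG : IsMedianGraph G) (x y z : V) : ∃ m,
    G.dist x m + G.dist m y = G.dist x y ∧ G.dist y m + G.dist m z = G.dist y z ∧
    G.dist z m + G.dist m x = G.dist z x := by
  obtain ⟨m, ⟨h1, h2, h3⟩, _⟩ := hG.2 x y z
  exact ⟨m, h1, h2, h3⟩

lemma mg_uniq (hG : IsMedianGraph G) {x y z m m' : V}
    (h1 : G.dist x m + G.dist m y = G.dist x y) (h2 : G.dist y m + G.dist m z = G.dist y z)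
    (h3 : G.dist z m + G.dist m x = G.dist z x)
    (k1 : G.dist x m' + G.dist m' y = G.dist x y) (k2 : G.dist y m' + G.dist m' z = G.dist y z)
    (k3 : G.dist z m' + G.dist m' x = G.dist z x) : m = m' := by
  obtain ⟨n, _, hn⟩ := hG.2 x y z
  rw [hn m ⟨h1, h2, h3⟩, hn m' ⟨k1, k2, k3⟩]

lemma mg_bip (hG : IsMedianGraph G) (v : V) {x y : V} (h : G.Adj x y) :
    G.dist v y = G.dist v x + 1 ∨ G.dist v x = G.dist v y + 1 := by
  obtain ⟨m, h1, h2, h3⟩ := mg_med hG v x y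
  have e := mg_one h
  have c1 := G.dist_comm (u := x) (v := y)
  have c2 := G.dist_comm (u := v) (v := y)
  have c3 := G.dist_comm (u := v) (v := x)
  rcases Nat.eq_zero_or_pos (G.dist x m) with h0 | h0
  · have := mg_eq hG h0
    subst this
    left; omega
  · have := mg_eq hG (show G.dist m y = 0 by omega)
    subst this
    right; omega

lemma mg_two (hG : IsMedianGraph G) {a b x : V} (hab : a ≠ b) (ha : G.Adj x a) (hb : G.Adj x b) :
    G.dist a b = 2 := by
  have h1 := mg_tri hG a x b
  have ea := mg_one ha
  have eb := mg_one hb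
  have ea' := mg_one ha.symm
  have h0 : G.dist a b ≠ 0 := fun h => hab (mg_eq hG h)
  have h2 : G.dist a b ≠ 1 := by
    intro h
    have := mg_bip hG x (SimpleGraph.dist_eq_one_iff_adj.1 h)
    omega
  omega

lemma mg_k23 (hG : IsMedianGraph G) {x y a b c : V} (hxy : x ≠ y) (hab : a ≠ b) (hbc : b ≠ c)
    (hca : c ≠ a) (xa : G.Adj x a) (xb : G.Adj x b) (xc : G.Adj x c)
    (ya : G.Adj y a) (yb : G.Adj y b) (yc : G.Adj y c) : False := by
  apply hxy
  have := mg_two hG hab xa xb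
  have := mg_two hG hbc xb xc
  have := mg_two hG hca xc xa
  have := mg_one xa
  have := mg_one xb
  have := mg_one xc
  have := mg_one xa.symm
  have := mg_one xb.symm
  have := mg_one xc.symm
  have := mg_one ya
  have := mg_one yb
  have := mg_one yc
  have := mg_one ya.symm
  have := mg_one yb.symm
  have := mg_one yc.symm
  apply mg_uniq hG (x := a) (y := b) (z := c) <;> omega

lemma mg_quad (hG : IsMedianGraph G) (v : V) {x y z : V} (hxz : x ≠ z) (xy : G.Adj x y)
    (zy : G.Adj z y) (hx : G.dist v y = G.dist v x + 1) (hz : G.dist v y = G.dist v z + 1) :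
    ∃ w, G.Adj w x ∧ G.Adj w z ∧ G.dist v x = G.dist v w + 1 := by
  obtain ⟨m, h1, h2, h3⟩ := mg_med hG v x z
  have h := mg_two hG hxz xy.symm zy.symm
  have c1 := G.dist_comm (u := x) (v := m)
  have c2 := G.dist_comm (u := z) (v := m)
  have c3 := G.dist_comm (u := v) (v := m)
  have c4 := G.dist_comm (u := v) (v := z)
  refine ⟨m, SimpleGraph.dist_eq_one_iff_adj.1 ?_, SimpleGraph.dist_eq_one_iff_adj.1 ?_, ?_⟩ <;> omega

lemma mg_pred (hG : IsMedianGraph G) {u x : V} (h : u ≠ x) :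
    ∃ w, G.Adj w x ∧ G.dist u x = G.dist u w + 1 := by
  obtain ⟨p, hp⟩ := hG.1.exists_walk_length_eq_dist x u
  cases p with
  | nil => exact absurd rfl h
  | cons hadj q =>
    rename_i w
    refine ⟨w, hadj.symm, ?_⟩
    have h1 := SimpleGraph.dist_le q
    rw [SimpleGraph.Walk.length_cons] at hp
    have c1 := G.dist_comm (u := x) (v := u)
    have c2 := G.dist_comm (u := w) (v := u)
    have := mg_bip hG u hadj
    omega

/-- every ascending edge of the interval is directed -/
def MgP (o : GraphOrientation G) (v x : V) : Prop :=
  ∀ w w', G.Adj w w' → G.dist v w' = G.dist v w + 1 →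
    G.dist v w' + G.dist w' x = G.dist v x → o.dir w w'

lemma mgP_mono (hG : IsMedianGraph G) {o : GraphOrientation G} {v x z : V} (hP : MgP o v x)
    (hz : G.dist v z + G.dist z x = G.dist v x) : MgP o v z := by
  intro w w' h1 h2 h3
  apply hP w w' h1 h2
  have := mg_tri hG w' z x
  have := mg_tri hG v w' x
  omega

lemma mgP_step (hG : IsMedianGraph G) {o : GraphOrientation G} (ho : IsAdmissible G o) (v : V) :
    ∀ n x y, G.dist v x = n → MgP o v x → o.dir x y → G.dist v y = n + 1 ∧ MgP o v y := by
  intro n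
  induction n using Nat.strong_induction_on with
  | _ n ih =>
  intro x y hn hP hd
  have xy := o.adj_of_dir _ _ hd
  have hy : G.dist v y = n + 1 := by
    rcases mg_bip hG v xy with h | h
    · omega
    · exfalso
      refine o.asymm _ _ hd (hP y x xy.symm h ?_)
      simp
  refine ⟨hy, ?_⟩
  have key : ∀ z, G.Adj z y → G.dist v y = G.dist v z + 1 → o.dir z y ∧ MgP o v z := by
    intro z zy hz
    by_cases hxz : x = z
    · subst hxz; exact ⟨hd, hP⟩
    obtain ⟨w, wx, wz, hw⟩ := mg_quad hG v hxz xy zy (by omega) hz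
    have hwy : w ≠ y := by rintro rfl; omega
    have e1 : o.dir w x := hP w x wx hw (by simp)
    have Pw : MgP o v w := mgP_mono hG hP (by have := mg_one wx; omega)
    have e2 := (ho w x y z wx xy zy.symm wz.symm hwy hxz).1 e1
    have e3 := (ho x y z w xy zy.symm wz.symm wx hxz hwy.symm).1 hd
    exact ⟨e2, (ih (G.dist v w) (by omega) w z rfl Pw e3).2⟩
  intro w w' ww hw' hI
  by_cases h : w' = y
  · subst h; exact (key w ww hw').1
  obtain ⟨z, zy, hz⟩ := mg_pred hG h
  have e := mg_one zy
  have t1 := mg_tri hG v z y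
  have t2 := mg_tri hG v w' z
  exact (key z zy (by have := mg_bip hG v zy; omega)).2 w w' ww hw' (by omega)

lemma mgP_of (hG : IsMedianGraph G) {o : GraphOrientation G} (ho : IsAdmissible G o) {v x : V}
    (h : ReflTransGen o.dir v x) : MgP o v x := by
  induction h with
  | refl =>
    intro w w' _ h1 h2
    have h3 := SimpleGraph.dist_self (G := G) (v := v)
    omega
  | tail _ h ih => exact (mgP_step hG ho v _ _ _ rfl ih h).2

lemma mg_step (hG : IsMedianGraph G) {o : GraphOrientation G} (ho : IsAdmissible G o) {v x y : V}
    (h : ReflTransGen o.dir v x) (hd : o.dir x y) : G.dist v y = G.dist v x + 1 :=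
  (mgP_step hG ho v _ _ _ rfl (mgP_of hG ho h) hd).1

lemma mg_add (hG : IsMedianGraph G) {o : GraphOrientation G} (ho : IsAdmissible G o) {u w x : V}
    (h : ReflTransGen o.dir u w) (h' : ReflTransGen o.dir w x) :
    G.dist u w + G.dist w x = G.dist u x := by
  induction h' with
  | refl => simp
  | tail h1 hd ih =>
    have := mg_step hG ho h1 hd
    have := mg_step hG ho (h.trans h1) hd
    omega

lemma mgP_to (hG : IsMedianGraph G) {o : GraphOrientation G} {v : V} :
    ∀ n w x, MgP o v x → G.dist v w + G.dist w x = G.dist v x → G.dist w x = n →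
      ReflTransGen o.dir w x := by
  intro n
  induction n with
  | zero =>
    intro w x _ _ h
    rw [mg_eq hG h]
  | succ n ih =>
    intro w x hP hI h
    have hne : w ≠ x := by rintro rfl; simp at h
    obtain ⟨z, zx, hz⟩ := mg_pred hG hne
    have e := mg_one zx
    have t1 := mg_tri hG v z x
    have t2 := mg_tri hG v w z
    refine ReflTransGen.tail (ih w z (mgP_mono hG hP (by omega)) (by omega) (by omega)) ?_
    exact hP z x zx (by omega) (by simp)

lemma mg_btw (hG : IsMedianGraph G) {o : GraphOrientation G} (ho : IsAdmissible G o) {v w x : V}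
    (h : ReflTransGen o.dir v x) (hI : G.dist v w + G.dist w x = G.dist v x) :
    ReflTransGen o.dir v w ∧ ReflTransGen o.dir w x := by
  have hP := mgP_of hG ho h
  exact ⟨mgP_to hG _ v w (mgP_mono hG hP hI) (by simp) rfl, mgP_to hG _ w x hP hI rfl⟩

lemma mg_dir (hG : IsMedianGraph G) {o : GraphOrientation G} (ho : IsAdmissible G o) {v w x : V}
    (h : ReflTransGen o.dir v x) (a : G.Adj w x) (hI : G.dist v x = G.dist v w + 1) :
    o.dir w x := mgP_of hG ho h w x a hI (by simp)

lemma mg_conv (hG : IsMedianGraph G) {o : GraphOrientation G} (ho : IsAdmissible G o) {v : V} :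
    ∀ n p r m, ReflTransGen o.dir v p → ReflTransGen o.dir v r → G.dist p r = n →
      G.dist p m + G.dist m r = G.dist p r → ReflTransGen o.dir v m := by
  intro n
  induction n using Nat.strong_induction_on with
  | _ n ih =>
  intro p r m hp hr hn hm
  by_cases hpm : m = p
  · subst hpm; exact hp
  obtain ⟨m1, m1p, hm1⟩ := mg_pred hG hpm
  have e := mg_one m1p
  have c1 := G.dist_comm (u := p) (v := m)
  have c2 := G.dist_comm (u := m1) (v := m)
  have c3 := G.dist_comm (u := m1) (v := p)
  have t1 := mg_tri hG p m1 r
  have t2 := mg_tri hG m1 m r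
  suffices hs : ReflTransGen o.dir v m1 from ih (n - 1) (by omega) m1 r m hs hr (by omega) (by omega)
  rcases mg_bip hG v m1p with h | h
  · exact (mg_btw hG ho hp (by omega)).1
  obtain ⟨w, w1, w2, w3⟩ := mg_med hG v p r
  by_cases hwp : w = p
  · subst hwp
    have hwr : ReflTransGen o.dir w r :=
      (mg_btw hG ho hr (by
        have := G.dist_comm (u := v) (v := w)
        have := G.dist_comm (u := r) (v := w)
        have := G.dist_comm (u := r) (v := v)
        omega)).2
    exact hp.trans (mg_btw hG ho hwr (w := m1) (by omega)).1
  obtain ⟨p', p'p, hp'⟩ := mg_pred hG hwp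
  have e' := mg_one p'p
  have c4 := G.dist_comm (u := p) (v := w)
  have c5 := G.dist_comm (u := p') (v := w)
  have c6 := G.dist_comm (u := p') (v := p)
  have t3 := mg_tri hG v w p'
  have t4 := mg_tri hG v p' p
  have t5 := mg_tri hG p' w r
  have t6 := mg_tri hG p p' r
  have Fp' := mg_btw hG ho hp (w := p') (by omega)
  have hne : p' ≠ m1 := by rintro rfl; omega
  have d1 := G.dist_comm (u := r) (v := p)
  have d2 := G.dist_comm (u := r) (v := p')
  have d3 := G.dist_comm (u := r) (v := m1)
  obtain ⟨w', w'p', w'm1, hw'⟩ := mg_quad hG r hne p'p m1p (by omega) (by omega)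
  have f1 := mg_one w'p'
  have f2 := mg_one w'm1
  have d4 := G.dist_comm (u := r) (v := w')
  have d5 := G.dist_comm (u := p') (v := w')
  have Fw' : ReflTransGen o.dir v w' := ih (n - 1) (by omega) p' r w' Fp'.1 hr (by omega) (by omega)
  have b1 := mg_bip hG v w'p'
  have b2 := mg_bip hG v w'm1
  have g := mg_dir hG ho Fw' w'p'.symm (by omega)
  have hpw : w' ≠ p := by rintro rfl; omega
  have := (ho p' w' m1 p w'p'.symm w'm1 m1p p'p.symm hne hpw).1 g
  exact hp.tail this

/-- reversed orientation -/
def mgRev (o : GraphOrientation G) : GraphOrientation G where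
  dir a b := o.dir b a
  adj_of_dir a b h := (o.adj_of_dir b a h).symm
  total a b h := o.total b a h.symm
  asymm a b h := o.asymm b a h

lemma mgRev_adm {o : GraphOrientation G} (ho : IsAdmissible G o) : IsAdmissible G (mgRev o) := by
  intro a b c d h1 h2 h3 h4 h5 h6
  exact ho b a d c h1.symm h4.symm h3.symm h2.symm h6 h5

/-- orientation away from a base point -/
def mgBase (hG : IsMedianGraph G) (b : V) : GraphOrientation G where
  dir x y := G.Adj x y ∧ G.dist b y = G.dist b x + 1
  adj_of_dir _ _ h := h.1
  total x y h := by
    rcases mg_bip hG b h with k | k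
    · exact Or.inl ⟨h, k⟩
    · exact Or.inr ⟨h.symm, k⟩
  asymm x y h k := by omega

lemma mgBase_aux (hG : IsMedianGraph G) (v : V) {a b c d : V} (ab : G.Adj a b) (bc : G.Adj b c)
    (cd : G.Adj c d) (da : G.Adj d a) (hac : a ≠ c) (hbd : b ≠ d)
    (h : G.dist v b = G.dist v a + 1) : G.dist v c = G.dist v d + 1 := by
  rcases mg_bip hG v cd with k | k
  · exfalso
    have b1 := mg_bip hG v bc
    have b2 := mg_bip hG v da
    obtain ⟨w, wa, wc, hw⟩ := mg_quad hG v hac ab bc.symm h (by omega)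
    have hwb : w ≠ b := by rintro rfl; omega
    have hdw : d ≠ w := by rintro rfl; omega
    exact mg_k23 hG hac hwb hbd hdw wa.symm ab da.symm wc.symm bc.symm cd
  · exact k

lemma mgBase_adm (hG : IsMedianGraph G) (v : V) : IsAdmissible G (mgBase hG v) := by
  intro a b c d ab bc cd da hac hbd
  constructor
  · rintro ⟨_, h⟩
    exact ⟨cd.symm, mgBase_aux hG v ab bc cd da hac hbd h⟩
  · rintro ⟨_, h⟩
    exact ⟨ab, mgBase_aux hG v cd.symm bc.symm ab.symm da.symm hbd.symm hac.symm h⟩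

lemma mgBase_iff (hG : IsMedianGraph G) (b a z : V) :
    G.dist b a + G.dist a z = G.dist b z ↔ ReflTransGen (mgBase hG b).dir a z := by
  have key : ∀ x, ReflTransGen (mgBase hG b).dir b x := by
    intro x
    refine mgP_to hG (v := b) _ b x ?_ (by simp) rfl
    intro w w' h1 h2 _
    exact ⟨h1, h2⟩
  constructor
  · intro h
    exact (mg_btw hG (mgBase_adm hG b) (key z) h).2
  · intro h
    exact mg_add hG (mgBase_adm hG b) (key a) h

/-- cones are convex -/
lemma mg_cone (hG : IsMedianGraph G) {b a p r m : V}
    (hp : G.dist b a + G.dist a p = G.dist b p) (hr : G.dist b a + G.dist a r = G.dist b r)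
    (hm : G.dist p m + G.dist m r = G.dist p r) : G.dist b a + G.dist a m = G.dist b m := by
  rw [mgBase_iff hG] at hp hr ⊢
  exact mg_conv hG (mgBase_adm hG b) _ p r m hp hr rfl hm

lemma mgRev_iff (o : GraphOrientation G) (a b : V) :
    ReflTransGen (mgRev o).dir a b ↔ ReflTransGen o.dir b a := by
  constructor
  · intro h
    induction h with
    | refl => exact .refl
    | tail _ h ih => exact ReflTransGen.head h ih
  · intro h
    induction h with
    | refl => exact .refl
    | tail _ h ih => exact ReflTransGen.head h ih

lemma mg_lower_fin (hG : IsMedianGraph G) (v : V) :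
    ∀ n x, G.dist v x = n → {y | G.Adj y x ∧ G.dist v x = G.dist v y + 1}.Finite := by
  intro n
  induction n with
  | zero =>
    intro x h
    convert Set.finite_empty
    ext y
    simp
    omega
  | succ n ih =>
    intro x hx
    have hne : v ≠ x := by rintro rfl; simp at hx
    obtain ⟨y0, y0x, hy0⟩ := mg_pred hG hne
    have hf := ih y0 (by omega)
    have hw : ∀ y, ∃ w, (G.Adj y x ∧ G.dist v x = G.dist v y + 1) → y ≠ y0 →
        (G.Adj w y0 ∧ G.Adj w y ∧ G.dist v y0 = G.dist v w + 1) := by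
      intro y
      by_cases hy : (G.Adj y x ∧ G.dist v x = G.dist v y + 1) ∧ y ≠ y0
      · obtain ⟨w, hw⟩ := mg_quad hG v hy.2.symm y0x hy.1.1 hy0 hy.1.2
        exact ⟨w, fun _ _ => hw⟩
      · exact ⟨y, fun h1 h2 => absurd ⟨h1, h2⟩ hy⟩
    choose f hf' using hw
    have : ({y | G.Adj y x ∧ G.dist v x = G.dist v y + 1} \ {y0}).Finite := by
      refine Set.Finite.of_finite_image (f := f) (hf.subset ?_) ?_
      · rintro _ ⟨y, ⟨h1, h2⟩, rfl⟩
        have := hf' y h1 h2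
        exact ⟨this.1, this.2.2⟩
      · rintro y ⟨h1, h2⟩ z ⟨h3, h4⟩ hyz
        have k1 := hf' y h1 h2
        have k2 := hf' z h3 h4
        by_contra hne
        rw [← hyz] at k2
        have hxw : x ≠ f y := by intro h; have := k1.2.2; rw [← h] at this; omega
        exact mg_k23 hG hxw hne h4 (Ne.symm h2) h1.1.symm h3.1.symm y0x.symm k1.2.1 k2.2.1 k1.1
    refine (this.union (Set.finite_singleton y0)).subset ?_
    intro y hy
    by_cases h : y = y0
    · right; exact h
    · left; exact ⟨hy, h⟩

lemma mg_int_fin (hG : IsMedianGraph G) (v : V) :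
    ∀ n x, G.dist v x = n → {w | G.dist v w + G.dist w x = G.dist v x}.Finite := by
  intro n
  induction n with
  | zero =>
    intro x h
    refine (Set.finite_singleton x).subset ?_
    intro w hw
    exact mg_eq hG (show G.dist w x = 0 by simp only [Set.mem_ofPred_eq] at hw; omega)
  | succ n ih =>
    intro x hx
    have h1 := (mg_lower_fin hG v _ x hx).biUnion
      (t := fun y => {w | G.dist v w + G.dist w y = n})
      (fun y hy => by
        have e : G.dist v y = n := by have := hy.2; omega
        have := ih y e
        rwa [e] at this)
    refine (h1.union (Set.finite_singleton x)).subset ?_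
    intro w hw
    simp only [Set.mem_ofPred_eq] at hw
    by_cases h : w = x
    · right; exact h
    left
    obtain ⟨z, zx, hz⟩ := mg_pred hG h
    have e := mg_one zx
    have t1 := mg_tri hG v z x
    have t2 := mg_tri hG v w z
    simp only [Set.mem_iUnion]
    exact ⟨z, ⟨zx, by omega⟩, show _ = n by omega⟩

lemma mg_antisymm (hG : IsMedianGraph G) {o : GraphOrientation G} (ho : IsAdmissible G o) {a b : V}
    (h : ReflTransGen o.dir a b) (h' : ReflTransGen o.dir b a) : a = b := by
  have := mg_add hG ho h h'
  simp at this
  exact mg_eq hG (by simpa using this.1)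

/-- meets -/
lemma mg_meet (hG : IsMedianGraph G) {o : GraphOrientation G} (ho : IsAdmissible G o) {v a b : V}
    (ha : ReflTransGen o.dir v a) (hb : ReflTransGen o.dir v b) :
    ∃ m, ReflTransGen o.dir v m ∧ ReflTransGen o.dir m a ∧ ReflTransGen o.dir m b ∧
      G.dist a m + G.dist m b = G.dist a b ∧
      ∀ u, ReflTransGen o.dir v u → ReflTransGen o.dir u a → ReflTransGen o.dir u b →
        ReflTransGen o.dir u m := by
  obtain ⟨m, h1, h2, h3⟩ := mg_med hG v a b
  have k1 := mg_btw hG ho ha h1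
  have h3' : G.dist v m + G.dist m b = G.dist v b := by
    rw [G.dist_comm (u := v) (v := m), G.dist_comm (u := m) (v := b), G.dist_comm (u := v) (v := b)]
    omega
  have k2 := mg_btw hG ho hb h3'
  refine ⟨m, k1.1, k1.2, k2.2, h2, ?_⟩
  intro u hu hua hub
  obtain ⟨m', l1, l2, l3⟩ := mg_med hG u a b
  have q1 := mg_btw hG ho hua l1
  have l3' : G.dist u m' + G.dist m' b = G.dist u b := by
    rw [G.dist_comm (u := u) (v := m'), G.dist_comm (u := m') (v := b),
      G.dist_comm (u := u) (v := b)]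
    omega
  have q2 := mg_btw hG ho hub l3'
  have r1 := mg_add hG ho (hu.trans q1.1) q1.2
  have r2 := mg_add hG ho (hu.trans q1.1) q2.2
  have : m = m' := by
    refine mg_uniq hG h1 h2 h3 r1 l2 ?_
    rw [G.dist_comm (u := m') (v := v), G.dist_comm (u := b) (v := m'),
      G.dist_comm (u := b) (v := v)]
    omega
  rw [this]
  exact q1.1

/-- joins of bounded pairs -/
lemma mg_join (hG : IsMedianGraph G) {o : GraphOrientation G} (ho : IsAdmissible G o) {a b u : V}
    (ha : ReflTransGen o.dir a u) (hb : ReflTransGen o.dir b u) :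
    ∃ m, ReflTransGen o.dir a m ∧ ReflTransGen o.dir b m ∧
      G.dist a m + G.dist m b = G.dist a b ∧
      ∀ z, ReflTransGen o.dir a z → ReflTransGen o.dir b z → ReflTransGen o.dir m z := by
  obtain ⟨m, h1, h2, h3⟩ := mg_med hG a b u
  have k2 := mg_btw hG ho hb h2
  have k1 := mg_btw hG ho ha (w := m) (by
    rw [G.dist_comm (u := a) (v := m), G.dist_comm (u := m) (v := u),
      G.dist_comm (u := a) (v := u)]
    omega)
  refine ⟨m, k1.1, k2.1, h1, ?_⟩
  intro z hz hz'
  rw [← mgRev_iff] at hz hz' ⊢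
  exact mg_conv hG (mgRev_adm ho) _ a b m hz hz' rfl h1

lemma mg_helly (hG : IsMedianGraph G) {o : GraphOrientation G} (ho : IsAdmissible G o) {a b c : V}
    (h1 : ∃ u, ReflTransGen o.dir a u ∧ ReflTransGen o.dir b u)
    (h2 : ∃ u, ReflTransGen o.dir b u ∧ ReflTransGen o.dir c u)
    (h3 : ∃ u, ReflTransGen o.dir c u ∧ ReflTransGen o.dir a u) :
    ∃ u, ReflTransGen o.dir a u ∧ ReflTransGen o.dir b u ∧ ReflTransGen o.dir c u := by
  obtain ⟨p, pa, pb⟩ := h1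
  obtain ⟨q, qb, qc⟩ := h2
  obtain ⟨r, rc, ra⟩ := h3
  obtain ⟨m, m1, m2, m3⟩ := mg_med hG p q r
  exact ⟨m, mg_conv hG ho _ r p m ra pa rfl m3, mg_conv hG ho _ p q m pb qb rfl m1,
    mg_conv hG ho _ q r m qc rc rfl m2⟩

/-- join irreducible elements of the filter -/
def MgJI (o : GraphOrientation G) (v j : V) : Prop :=
  ReflTransGen o.dir v j ∧ ∃ p, ReflTransGen o.dir v p ∧ o.dir p j ∧
    ∀ q, ReflTransGen o.dir v q → o.dir q j → q = p

lemma mg_prime (hG : IsMedianGraph G) {o : GraphOrientation G} (ho : IsAdmissible G o)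
    {v a b m j : V} (ha : ReflTransGen o.dir v a) (hb : ReflTransGen o.dir v b)
    (hm : G.dist a m + G.dist m b = G.dist a b)
    (hj : MgJI o v j) (hjm : ReflTransGen o.dir j m) :
    ReflTransGen o.dir j a ∨ ReflTransGen o.dir j b := by
  by_contra hcon
  push Not at hcon
  obtain ⟨hvj, p, hvp, hpj, hu⟩ := hj
  have e := mg_one (o.adj_of_dir _ _ hpj)
  have e' := mg_one (o.adj_of_dir _ _ hpj).symm
  have key : ∀ a, ReflTransGen o.dir v a → ¬ ReflTransGen o.dir j a →
      G.dist j p + G.dist p a = G.dist j a := by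
    intro a ha hja
    obtain ⟨s, s1, s2, s3, s4, _⟩ := mg_meet hG ho hvj ha
    have hsp : ReflTransGen o.dir s p := by
      rcases ReflTransGen.cases_tail s2 with h | ⟨q, q1, q2⟩
      · subst h; exact absurd s3 hja
      · rw [← hu q (s1.trans q1) q2]; exact q1
    have h1 := mg_step hG ho hsp hpj
    have t1 := mg_tri hG p s a
    have t2 := mg_tri hG j p a
    rw [G.dist_comm (u := s) (v := j), G.dist_comm (u := s) (v := p)] at h1
    omega
  have h1 := mg_cone hG (key a ha hcon.1) (key b hb hcon.2) hm
  have h2 := mg_add hG ho (ReflTransGen.single hpj) hjm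
  omega

lemma mg_gen (hG : IsMedianGraph G) {o : GraphOrientation G} (ho : IsAdmissible G o)
    {v y : V} (hy : ReflTransGen o.dir v y) : ∀ n z, G.dist v z = n → ReflTransGen o.dir v z →
    (∀ j, MgJI o v j → ReflTransGen o.dir j z → ReflTransGen o.dir j y) →
    ReflTransGen o.dir z y := by
  intro n
  induction n with
  | zero => intro z h _ _; rw [← mg_eq hG h]; exact hy
  | succ n ih =>
    intro z hn hz H
    rcases ReflTransGen.cases_tail hz with h | ⟨p, hp, hpz⟩
    · subst h; exact hy
    have low : ∀ q, ReflTransGen o.dir v q → o.dir q z → G.dist v q = n ∧ ReflTransGen o.dir q y := by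
      intro q hq hqz
      have e := mg_step hG ho hq hqz
      exact ⟨by omega, ih q (by omega) hq (fun j hj hjq => H j hj (hjq.tail hqz))⟩
    by_cases hji : MgJI o v z
    · exact H z hji .refl
    have : ∃ q, ReflTransGen o.dir v q ∧ o.dir q z ∧ q ≠ p := by
      by_contra hcon
      push Not at hcon
      exact hji ⟨hz, p, hp, hpz, hcon⟩
    obtain ⟨q, hq, hqz, hqp⟩ := this
    obtain ⟨m, m1, m2, m3, _, m4⟩ := mg_meet hG ho hz hy
    have pm := m4 p hp (.single hpz) (low p hp hpz).2
    have qm := m4 q hq (.single hqz) (low q hq hqz).2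
    have a1 := mg_add hG ho hp pm
    have a2 := mg_add hG ho hq qm
    have a3 := mg_add hG ho m1 m2
    have b1 := (low p hp hpz).1
    have b2 := (low q hq hqz).1
    by_cases h0 : G.dist m z = 0
    · rw [← mg_eq hG h0]; exact m3
    · exfalso
      have c1 := mg_eq hG (show G.dist p m = 0 by omega)
      have c2 := mg_eq hG (show G.dist q m = 0 by omega)
      exact hqp (c2.trans c1.symm)

lemma mg_lub (hG : IsMedianGraph G) {o : GraphOrientation G} (ho : IsAdmissible G o) {v : V}
    {T : Set V} (hT : T.Finite) : (∀ t ∈ T, ReflTransGen o.dir v t) →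
    (∀ s ∈ T, ∀ t ∈ T, ∃ u, ReflTransGen o.dir s u ∧ ReflTransGen o.dir t u) →
    ∃ x, ReflTransGen o.dir v x ∧ (∀ t ∈ T, ReflTransGen o.dir t x) ∧
      (∀ j, MgJI o v j → ReflTransGen o.dir j x → ∃ t ∈ T, ReflTransGen o.dir j t) ∧
      (∀ b, ReflTransGen o.dir v b →
        (∀ t ∈ T, ∃ u, ReflTransGen o.dir b u ∧ ReflTransGen o.dir t u) →
        ∃ u, ReflTransGen o.dir b u ∧ ReflTransGen o.dir x u) := by
  induction T, hT using Set.Finite.induction_on with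
  | empty =>
    intro _ _
    refine ⟨v, .refl, by simp, ?_, fun b hb _ => ⟨b, .refl, hb⟩⟩
    rintro j ⟨hj, p, hp, hpj, _⟩ hjv
    exfalso
    have := mg_antisymm hG ho hj hjv
    subst this
    have := mg_step hG ho hp hpj
    simp at this
  | @insert a T _ _ ih =>
    intro hF hC
    obtain ⟨x, x1, x2, x3, x4⟩ := ih (fun t ht => hF t (.inr ht))
      (fun s hs t ht => hC s (.inr hs) t (.inr ht))
    have hva := hF a (.inl rfl)
    obtain ⟨u, ua, ux⟩ := x4 a hva (fun t ht => hC a (.inl rfl) t (.inr ht))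
    obtain ⟨m, m1, m2, m3, m4⟩ := mg_join hG ho ua ux
    refine ⟨m, hva.trans m1, ?_, ?_, ?_⟩
    · rintro t (rfl | ht)
      · exact m1
      · exact (x2 t ht).trans m2
    · intro j hj hjm
      rcases mg_prime hG ho hva x1 m3 hj hjm with h | h
      · exact ⟨a, .inl rfl, h⟩
      · obtain ⟨t, ht, h⟩ := x3 j hj h
        exact ⟨t, .inr ht, h⟩
    · intro b hb hbt
      obtain ⟨w, w1, w2⟩ := x4 b hb (fun t ht => hbt t (.inr ht))
      obtain ⟨w', w1', w2'⟩ := hbt a (.inl rfl)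
      obtain ⟨z, z1, z2, z3⟩ := mg_helly hG ho ⟨u, ua, ux⟩ ⟨w, w2, w1⟩ ⟨w', w1', w2'⟩
      exact ⟨z, z3, m4 z z1 z2⟩

/-- the event structure of join irreducibles -/
def mgES (hG : IsMedianGraph G) (o : GraphOrientation G) (ho : IsAdmissible G o) (v : V) :
    EventStructure where
  E := {j : V // MgJI o v j}
  le a b := ReflTransGen o.dir a.1 b.1
  le_refl _ := .refl
  le_trans _ _ _ h h' := h.trans h'
  le_antisymm _ _ h h' := Subtype.ext (mg_antisymm hG ho h h')
  finite_below e := by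
    refine Set.Finite.of_finite_image (f := Subtype.val)
      ((mg_int_fin hG v _ e.1 rfl).subset ?_) Subtype.val_injective.injOn
    rintro _ ⟨w, hw, rfl⟩
    exact mg_add hG ho w.2.1 hw
  conflict a b := ¬ ∃ u, ReflTransGen o.dir a.1 u ∧ ReflTransGen o.dir b.1 u
  conflict_irrefl e h := h ⟨e.1, .refl, .refl⟩
  conflict_symm _ _ h := fun ⟨u, h1, h2⟩ => h ⟨u, h2, h1⟩
  conflict_hereditary _ _ _ h h' := fun ⟨u, h1, h2⟩ => h ⟨u, h1, h'.trans h2⟩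

end MedianAux

/-- For any vertex `v` of a directed median graph `(G,o)`, the poset
`(F_o(v,G), ⪯_o)` is order-isomorphic to the domain `(D(E), ⊆)` of some event
structure `E`: there is a bijection `ψ` from `F_o(v,G)` onto the configurations of
`E` with `x ⪯_o y` iff `ψ x ⊆ ψ y`. -/
theorem oFilter_is_event_domain {V : Type} (G : SimpleGraph V) (hG : IsMedianGraph G)
    (o : GraphOrientation G) (ho : IsAdmissible G o) (v : V) :
    ∃ (ES : EventStructure) (ψ : V → Set ES.E),
      (∀ x ∈ oFilter o v, ES.IsConfig (ψ x)) ∧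
      Set.InjOn ψ (oFilter o v) ∧
      (∀ c : Set ES.E, ES.IsConfig c → ∃ x ∈ oFilter o v, ψ x = c) ∧
      ∀ x ∈ oFilter o v, ∀ y ∈ oFilter o v,
        (Relation.ReflTransGen o.dir x y ↔ ψ x ⊆ ψ y) := by

  have hord : ∀ x ∈ oFilter o v, ∀ y ∈ oFilter o v, (ReflTransGen o.dir x y ↔
      {e : (mgES hG o ho v).E | ReflTransGen o.dir e.1 x} ⊆ {e | ReflTransGen o.dir e.1 y}) := by
    intro x hx y hy
    constructor
    · intro h e he
      exact ReflTransGen.trans he h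
    · intro h
      exact mg_gen hG ho hy _ x rfl hx (fun j hj hjx => h (a := ⟨j, hj⟩) hjx)
  refine ⟨mgES hG o ho v, fun x => {e | ReflTransGen o.dir e.1 x}, ?_, ?_, ?_, hord⟩
  · intro x hx
    refine ⟨?_, fun e he e' h => ReflTransGen.trans h he, fun e he e' he' h => h ⟨x, he, he'⟩⟩
    refine Set.Finite.of_finite_image (f := Subtype.val)
      ((mg_int_fin hG v _ x rfl).subset ?_) Subtype.val_injective.injOn
    rintro _ ⟨w, hw, rfl⟩
    exact mg_add hG ho w.2.1 hw
  · intro x hx y hy h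
    exact mg_antisymm hG ho ((hord x hx y hy).2 h.subset) ((hord y hy x hx).2 h.symm.subset)
  · rintro c ⟨hfin, hdown, hcf⟩
    obtain ⟨x, x1, x2, x3, _⟩ := mg_lub hG ho (v := v) (hfin.image Subtype.val)
      (by rintro _ ⟨e, _, rfl⟩; exact e.2.1)
      (by
        rintro _ ⟨e, he, rfl⟩ _ ⟨e', he', rfl⟩
        exact not_not.1 (hcf e he e' he'))
    refine ⟨x, x1, ?_⟩
    ext e
    constructor
    · intro h
      obtain ⟨_, ⟨t, ht, rfl⟩, h⟩ := x3 e.1 e.2 h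
      exact hdown t ht e h
    · intro h
      exact x2 e.1 ⟨e, h, rfl⟩
end

section
/- Let φ : G' → G be a square covering of simple graphs such that G' is a median graph, and let ũ and ũ' be vertices of G' with φ(ũ) = φ(ũ'). Let P₁ = (ũ = ũ₀, ũ₁, …, ũ_k) and P₂ = (ũ = ṽ₀, ṽ₁, …, ṽ_ℓ) be paths in G' starting at ũ, and let P₁' = (ũ' = ũ₀', ũ₁', …, ũ_k') and P₂' = (ũ' = ṽ₀', ṽ₁', …, ṽ_ℓ') be paths in G' starting at ũ' such that φ(ũ_i') = φ(ũ_i) for all 0 ≤ i ≤ k and φ(ṽ_j') = φ(ṽ_j) for all 0 ≤ j ≤ ℓ. Then ũ_k = ṽ_ℓ if and only if ũ_k' = ṽ_ℓ'. -/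
/-- A graph covering map: a locally bijective homomorphism of simple graphs. -/
def IsGraphCovering {V' V : Type} (G' : SimpleGraph V') (G : SimpleGraph V)
    (φ : V' → V) : Prop :=
  (∀ u v : V', G'.Adj u v → G.Adj (φ u) (φ v)) ∧
  ∀ v' : V', Set.BijOn φ (G'.neighborSet v') (G.neighborSet (φ v'))

/-- A square covering: a covering map along which 4-cycles of `G` lift to 4-cycles
of `G'`. -/
def IsSquareCovering {V' V : Type} (G' : SimpleGraph V') (G : SimpleGraph V)
    (φ : V' → V) : Prop :=
  IsGraphCovering G' G φ ∧
  ∀ w₀ w₁ w₂ w₃ : V, G.Adj w₀ w₁ → G.Adj w₁ w₂ → G.Adj w₂ w₃ → G.Adj w₃ w₀ →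
    w₀ ≠ w₂ → w₁ ≠ w₃ →
    ∀ v₀' v₁' v₃' : V', φ v₀' = w₀ →
      G'.Adj v₀' v₁' → φ v₁' = w₁ → G'.Adj v₀' v₃' → φ v₃' = w₃ →
      ∃ v₂' : V', G'.Adj v₁' v₂' ∧ G'.Adj v₃' v₂' ∧ φ v₂' = w₂

/-- Pairs reachable by simultaneous geodesic lifting. -/
inductive GeoLift {V' V : Type} (G' : SimpleGraph V') (φ : V' → V) (u₁ u₂ : V') : V' → V' → Prop
  | base : GeoLift G' φ u₁ u₂ u₁ u₂
  | step {x y x' y' : V'} : GeoLift G' φ u₁ u₂ x y → G'.Adj x x' → G'.Adj y y' → φ x' = φ y' →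
      G'.dist u₁ x' = G'.dist u₁ x + 1 → GeoLift G' φ u₁ u₂ x' y'

section helpers

variable {V' V : Type} {G' : SimpleGraph V'} {G : SimpleGraph V} {φ : V' → V}

theorem cov_inj (hφ : IsSquareCovering G' G φ) {v a b : V'} (ha : G'.Adj v a) (hb : G'.Adj v b)
    (h : φ a = φ b) : a = b :=
  (hφ.1.2 v).injOn (by simpa using ha) (by simpa using hb) h

theorem cov_lift (hφ : IsSquareCovering G' G φ) {x y x' : V'} (h : φ x = φ y)
    (ha : G'.Adj x x') : ∃ y', G'.Adj y y' ∧ φ x' = φ y' := by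
  have h1 : φ x' ∈ G.neighborSet (φ y) := by
    have := hφ.1.1 _ _ ha
    rw [h] at this
    simpa using this
  obtain ⟨y', hy, he⟩ := (hφ.1.2 y).surjOn h1
  exact ⟨y', by simpa using hy, he.symm⟩

/-- Equidistant vertices from `u`: median is at half distance. -/
theorem med_half (hmed : IsMedianGraph G') (u a b : V') (h : G'.dist u a = G'.dist u b) :
    ∃ m, G'.dist a b = 2 * G'.dist m a ∧ G'.dist m a = G'.dist m b ∧
      G'.dist u a = G'.dist u m + G'.dist m a := by
  obtain ⟨m, ⟨h1, h2, h3⟩, -⟩ := hmed.2 a b u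
  simp only [gInterval, Set.mem_setOf_eq] at h1 h2 h3
  have e1 := G'.dist_comm (u := a) (v := m)
  have e2 := G'.dist_comm (u := b) (v := m)
  have e3 := G'.dist_comm (u := u) (v := m)
  have e4 := G'.dist_comm (u := u) (v := b)
  exact ⟨m, by omega, by omega, by omega⟩

theorem geo_phi {u₁ u₂ : V'} (hs : φ u₁ = φ u₂) {x y : V'} (h : GeoLift G' φ u₁ u₂ x y) :
    φ x = φ y := by
  cases h <;> assumption

theorem geo_exists (hφ : IsSquareCovering G' G φ) (hmed : IsMedianGraph G') {u₁ u₂ : V'}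
    (hs : φ u₁ = φ u₂) (n : ℕ) : ∀ x, G'.dist u₁ x = n → ∃ y, GeoLift G' φ u₁ u₂ x y := by
  induction n with
  | zero =>
    intro x hx
    have : u₁ = x := hmed.1.dist_eq_zero_iff.1 hx
    subst this
    exact ⟨u₂, .base⟩
  | succ n ih =>
    intro x hx
    obtain ⟨a, hax, ha⟩ : ∃ a, G'.Adj a x ∧ G'.dist u₁ a = n := by
      obtain ⟨p, hp⟩ := hmed.1.exists_walk_length_eq_dist x u₁
      rw [G'.dist_comm, hx] at hp
      cases p with
      | nil => simp at hp
      | @cons _ a _ h q =>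
        refine ⟨a, h.symm, ?_⟩
        simp only [SimpleGraph.Walk.length_cons] at hp
        have h1 := SimpleGraph.dist_le q
        have h2 := hmed.1.dist_triangle (u := u₁) (v := a) (w := x)
        have h3 : G'.dist a x = 1 := SimpleGraph.dist_eq_one_iff_adj.2 h.symm
        rw [G'.dist_comm] at h1
        omega
    obtain ⟨b, hb⟩ := ih a ha
    obtain ⟨y, hy, he⟩ := cov_lift hφ (geo_phi hs hb) hax
    exact ⟨y, .step hb hax hy he (by omega)⟩

theorem geo_unique (hφ : IsSquareCovering G' G φ) (hmed : IsMedianGraph G') {u₁ u₂ : V'}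
    (hs : φ u₁ = φ u₂) (n : ℕ) : ∀ x y y', G'.dist u₁ x = n → GeoLift G' φ u₁ u₂ x y →
      GeoLift G' φ u₁ u₂ x y' → y = y' := by
  induction n using Nat.strong_induction_on with
  | _ n ih =>
  intro x y y' hx h h'
  have key : ∀ {a b}, GeoLift G' φ u₁ u₂ a b → a = u₁ → b = u₂ := by
    intro a b h e
    cases h with
    | base => rfl
    | step _ _ _ _ h => subst e; simp at h
  by_cases hxu : x = u₁
  · rw [key h hxu, key h' hxu]
  cases h with
  | base => exact absurd rfl hxu
  | @step a b _ _ hab hax hby hp hd =>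
  cases h' with
  | base => exact absurd rfl hxu
  | @step a' b' _ _ hab' hax' hby' hp' hd' =>
  by_cases haa : a = a'
  · subst haa
    have : b = b' := ih _ (by omega) a b b' rfl hab hab'
    subst this
    exact cov_inj hφ hby hby' (hp.symm.trans hp')
  obtain ⟨m, h1, h2, h3⟩ := med_half hmed u₁ a a' (by omega)
  have h4 := hmed.1.dist_triangle (u := a) (v := x) (w := a')
  have h5 : G'.dist a x = 1 := SimpleGraph.dist_eq_one_iff_adj.2 hax
  have h6 : G'.dist x a' = 1 := SimpleGraph.dist_eq_one_iff_adj.2 hax'.symm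
  have h7 := hmed.1.pos_dist_of_ne haa
  have hma : G'.Adj m a := SimpleGraph.dist_eq_one_iff_adj.1 (by omega)
  have hma' : G'.Adj m a' := SimpleGraph.dist_eq_one_iff_adj.1 (by omega)
  have hmx : m ≠ x := by rintro rfl; omega
  obtain ⟨c, hc⟩ := geo_exists hφ hmed hs _ m rfl
  have hcb : ∀ {a b}, G'.Adj m a → GeoLift G' φ u₁ u₂ a b → G'.dist u₁ a < n →
      G'.dist u₁ a = G'.dist u₁ m + 1 → G'.Adj c b := by
    intro a b hm hab hlt hd
    obtain ⟨b1, hb1, he⟩ := cov_lift hφ (geo_phi hs hc) hm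
    have := ih _ hlt a b b1 rfl hab (.step hc hm hb1 he hd)
    exact this ▸ hb1
  have hcb1 := hcb hma hab (by omega) (by omega)
  have hcb2 := hcb hma' hab' (by omega) (by omega)
  obtain ⟨v, hv1, hv2, hv3⟩ := hφ.2 (φ m) (φ a) (φ x) (φ a') (hφ.1.1 _ _ hma) (hφ.1.1 _ _ hax)
    (hφ.1.1 _ _ hax'.symm) (hφ.1.1 _ _ hma'.symm)
    (fun e => hmx (cov_inj hφ hma.symm hax e))
    (fun e => haa (cov_inj hφ hax.symm hax'.symm e))
    c b b' (geo_phi hs hc).symm hcb1 (geo_phi hs hab).symm hcb2 (geo_phi hs hab').symm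
  rw [cov_inj hφ hby hv1 (hp.symm.trans hv3.symm), cov_inj hφ hby' hv2 (hp'.symm.trans hv3.symm)]

theorem geo_step (hφ : IsSquareCovering G' G φ) (hmed : IsMedianGraph G') {u₁ u₂ : V'}
    (hs : φ u₁ = φ u₂) {x y x' y' : V'} (h : GeoLift G' φ u₁ u₂ x y) (hx : G'.Adj x x')
    (hy : G'.Adj y y') (hp : φ x' = φ y') : GeoLift G' φ u₁ u₂ x' y' := by
  have d1 : G'.dist x x' = 1 := SimpleGraph.dist_eq_one_iff_adj.2 hx
  have d1' : G'.dist x' x = 1 := SimpleGraph.dist_eq_one_iff_adj.2 hx.symm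
  have t1 := hmed.1.dist_triangle (u := u₁) (v := x) (w := x')
  have t2 := hmed.1.dist_triangle (u := u₁) (v := x') (w := x)
  by_cases hup : G'.dist u₁ x' = G'.dist u₁ x + 1
  · exact .step h hx hy hp hup
  by_cases hdn : G'.dist u₁ x = G'.dist u₁ x' + 1
  · obtain ⟨z, hz⟩ := geo_exists hφ hmed hs _ x' rfl
    obtain ⟨w, hw, he⟩ := cov_lift hφ (geo_phi hs hz) hx.symm
    have : y = w := geo_unique hφ hmed hs _ x y w rfl h (.step hz hx.symm hw he hdn)
    subst this
    have : z = y' := cov_inj hφ hw.symm hy ((geo_phi hs hz).symm.trans hp)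
    exact this ▸ hz
  · obtain ⟨m, h1, -, -⟩ := med_half hmed u₁ x x' (by omega)
    omega

theorem geo_path (hφ : IsSquareCovering G' G φ) (hmed : IsMedianGraph G') {u₁ u₂ : V'}
    (hs : φ u₁ = φ u₂) (k : ℕ) (P P' : Fin (k + 1) → V')
    (hP : ∀ i : Fin k, G'.Adj (P i.castSucc) (P i.succ))
    (hP' : ∀ i : Fin k, G'.Adj (P' i.castSucc) (P' i.succ))
    (h0 : P 0 = u₁) (h0' : P' 0 = u₂) (him : ∀ i, φ (P' i) = φ (P i)) (i : Fin (k + 1)) :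
    GeoLift G' φ u₁ u₂ (P i) (P' i) := by
  induction i using Fin.induction with
  | zero => rw [h0, h0']; exact .base
  | succ i ih => exact geo_step hφ hmed hs ih (hP i) (hP' i) (him _).symm

end helpers

/-- Let `φ : G' → G` be a square covering with `G'` median, and let `u₁, u₂` be
vertices of `G'` with the same image. Given paths `P₁, P₂` starting at `u₁` and
paths `P₁', P₂'` starting at `u₂` whose images under `φ` agree with those of
`P₁, P₂` pointwise, the endpoints of `P₁` and `P₂` coincide iff the endpoints of
`P₁'` and `P₂'` coincide. -/
theorem square_covering_endpoint_coincidence {V' V : Type}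
    (G' : SimpleGraph V') (G : SimpleGraph V) (φ : V' → V)
    (hφ : IsSquareCovering G' G φ) (hmed : IsMedianGraph G')
    (u₁ u₂ : V') (hsame : φ u₁ = φ u₂) (k ℓ : ℕ)
    (P₁ : Fin (k + 1) → V') (P₂ : Fin (ℓ + 1) → V')
    (P₁' : Fin (k + 1) → V') (P₂' : Fin (ℓ + 1) → V')
    (hP₁ : ∀ i : Fin k, G'.Adj (P₁ i.castSucc) (P₁ i.succ))
    (hP₂ : ∀ j : Fin ℓ, G'.Adj (P₂ j.castSucc) (P₂ j.succ))
    (hP₁' : ∀ i : Fin k, G'.Adj (P₁' i.castSucc) (P₁' i.succ))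
    (hP₂' : ∀ j : Fin ℓ, G'.Adj (P₂' j.castSucc) (P₂' j.succ))
    (hs₁ : P₁ 0 = u₁) (hs₂ : P₂ 0 = u₁) (hs₁' : P₁' 0 = u₂) (hs₂' : P₂' 0 = u₂)
    (him₁ : ∀ i : Fin (k + 1), φ (P₁' i) = φ (P₁ i))
    (him₂ : ∀ j : Fin (ℓ + 1), φ (P₂' j) = φ (P₂ j)) :
    (P₁ (Fin.last k) = P₂ (Fin.last ℓ) ↔ P₁' (Fin.last k) = P₂' (Fin.last ℓ)) := by
  constructor
  · intro h
    have a := geo_path hφ hmed hsame k P₁ P₁' hP₁ hP₁' hs₁ hs₁' him₁ (Fin.last k)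
    have b := geo_path hφ hmed hsame ℓ P₂ P₂' hP₂ hP₂' hs₂ hs₂' him₂ (Fin.last ℓ)
    rw [← h] at b
    exact geo_unique hφ hmed hsame _ _ _ _ rfl a b
  · intro h
    have a := geo_path hφ hmed hsame.symm k P₁' P₁ hP₁' hP₁ hs₁' hs₁ (fun i => (him₁ i).symm)
      (Fin.last k)
    have b := geo_path hφ hmed hsame.symm ℓ P₂' P₂ hP₂' hP₂ hs₂' hs₂ (fun i => (him₂ i).symm)
      (Fin.last ℓ)
    rw [← h] at b
    exact geo_unique hφ hmed hsame.symm _ _ _ _ rfl a b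
end

section
/- Let T be a Wang tile set. If there exists a valid tiling f of ℤ² by T that is periodic — i.e., there is (a,b) ∈ ℤ² ∖ {(0,0)} with f(x+a, y+b) = f(x,y) for all (x,y) ∈ ℤ² — then there exists a valid doubly periodic tiling of ℤ² by T: a valid tiling g and integers a', b' > 0 such that g(x+a', y) = g(x, y+b') = g(x,y) for all (x,y) ∈ ℤ². -/
theorem wang_aux {T C : Type} [Finite T] (N E S W : T → C) (f : ℤ → ℤ → T)
    (hE : ∀ x y : ℤ, E (f x y) = W (f (x + 1) y))
    (hN : ∀ x y : ℤ, N (f x y) = S (f x (y + 1)))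
    (a b : ℤ) (hb : 0 < b)
    (hper : ∀ x y : ℤ, f (x + a) (y + b) = f x y) :
    ∃ g : ℤ → ℤ → T, ∃ a' b' : ℤ, 0 < a' ∧ 0 < b' ∧
      (∀ x y : ℤ, E (g x y) = W (g (x + 1) y)) ∧
      (∀ x y : ℤ, N (g x y) = S (g x (y + 1))) ∧
      (∀ x y : ℤ, g (x + a') y = g x y) ∧
      (∀ x y : ℤ, g x (y + b') = g x y) := by
  obtain ⟨A, hA0, hA1, hA2⟩ : ∃ A : ℤ, 0 ≤ A ∧ a ≤ A ∧ -A ≤ a :=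
    ⟨|a|, abs_nonneg a, le_abs_self a, neg_abs_le a⟩
  obtain ⟨x1, m, hm, hw⟩ : ∃ x1 m : ℤ, A < m ∧ ∀ i j : ℤ, -A ≤ i → i ≤ A → 0 ≤ j → j < b →
      f (x1 + i) j = f (x1 + m + i) j := by
    obtain ⟨k, l, hkl, h⟩ := Finite.exists_ne_map_eq_of_infinite
      (fun (k : ℤ) (p : Set.Icc (-A) A × Set.Ico 0 b) => f (k * (A + 1) + p.1.1) p.2.1)
    have main : ∀ i j : ℤ, -A ≤ i → i ≤ A → 0 ≤ j → j < b →
        f (k * (A + 1) + i) j = f (l * (A + 1) + i) j := fun i j h1 h2 h3 h4 =>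
      congrFun h (⟨i, h1, h2⟩, ⟨j, h3, h4⟩)
    rcases lt_or_gt_of_ne hkl with h | h
    · refine ⟨k * (A + 1), (l - k) * (A + 1), by nlinarith, fun i j h1 h2 h3 h4 => ?_⟩
      rw [main i j h1 h2 h3 h4]; congr 1; ring
    · refine ⟨l * (A + 1), (k - l) * (A + 1), by nlinarith, fun i j h1 h2 h3 h4 => ?_⟩
      rw [← main i j h1 h2 h3 h4]; congr 1; ring
  have key : ∀ t j : ℤ, -A ≤ t → t ≤ m + A → 0 ≤ j → j < b →
      f (x1 + t) j = f (x1 + t % m) j := by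
    intro t j h1 h2 h3 h4
    rcases lt_or_ge t 0 with h | h
    · have e : t % m = t + m := by
        rw [← Int.add_emod_right, Int.emod_eq_of_lt (by omega) (by omega)]
      rw [e, hw t j h1 (by omega) h3 h4]; congr 1; ring
    · rcases lt_or_ge t m with h' | h'
      · rw [Int.emod_eq_of_lt h h']
      · have e : t % m = t - m := by
          rw [← Int.sub_emod_right, Int.emod_eq_of_lt (by omega) (by omega)]
        rw [e, hw (t - m) j (by omega) (by omega) h3 h4]; congr 1; ring
  have hm0 : 0 < m := by omega
  refine ⟨fun x y => f (x1 + (x - a * (y / b)) % m) (y % b), m, b * m, hm0, by positivity,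
    ?_, ?_, ?_, ?_⟩
  · intro x y
    have r0 := Int.emod_nonneg (x - a * (y / b)) hm0.ne'
    have r1 := Int.emod_lt_of_pos (x - a * (y / b)) hm0
    show E (f _ _) = W (f _ _)
    rw [hE, add_assoc, key _ _ (by omega) (by omega) (Int.emod_nonneg y hb.ne')
      (Int.emod_lt_of_pos y hb), Int.emod_add_emod]
    congr 4; ring
  · intro x y
    have r0 := Int.emod_nonneg (x - a * (y / b)) hm0.ne'
    have r1 := Int.emod_lt_of_pos (x - a * (y / b)) hm0
    have s0 := Int.emod_nonneg y hb.ne'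
    have s1 := Int.emod_lt_of_pos y hb
    have hy := Int.emod_add_mul_ediv y b
    show N (f _ _) = S (f _ _)
    rw [hN]
    rcases lt_or_ge (y % b + 1) b with h | h
    · obtain ⟨e1, e2⟩ := (Int.ediv_emod_unique (a := y + 1) (r := y % b + 1) (q := y / b) hb).2
        ⟨by linarith, by omega, h⟩
      rw [e1, e2]
    · obtain ⟨e1, e2⟩ := (Int.ediv_emod_unique (a := y + 1) (r := 0) (q := y / b + 1) hb).2
        ⟨by rw [mul_add]; omega, le_refl _, hb⟩
      rw [e1, e2]
      have e3 : y % b + 1 = 0 + b := by omega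
      rw [e3]
      have := hper (x1 + ((x - a * (y / b)) % m - a)) 0
      rw [key _ _ (by omega) (by omega) le_rfl hb, Int.emod_sub_emod] at this
      have e4 : x - a * (y / b + 1) = x - a * (y / b) - a := by ring
      rw [e4, ← this]
      congr 2; ring
  · intro x y
    show f _ _ = f _ _
    rw [show x + m - a * (y / b) = x - a * (y / b) + m by ring, Int.add_emod_right]
  · intro x y
    show f _ _ = f _ _
    rw [Int.add_mul_emod_self_left, Int.add_mul_ediv_left _ _ hb.ne',
      show x - a * (y / b + m) = x - a * (y / b) + m * (-a) by ring, Int.add_mul_emod_self_left]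

theorem wang_aux2 {T C : Type} [Finite T] (N E S W : T → C) (f : ℤ → ℤ → T)
    (hE : ∀ x y : ℤ, E (f x y) = W (f (x + 1) y))
    (hN : ∀ x y : ℤ, N (f x y) = S (f x (y + 1)))
    (a b : ℤ) (hb : b ≠ 0)
    (hper : ∀ x y : ℤ, f (x + a) (y + b) = f x y) :
    ∃ g : ℤ → ℤ → T, ∃ a' b' : ℤ, 0 < a' ∧ 0 < b' ∧
      (∀ x y : ℤ, E (g x y) = W (g (x + 1) y)) ∧
      (∀ x y : ℤ, N (g x y) = S (g x (y + 1))) ∧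
      (∀ x y : ℤ, g (x + a') y = g x y) ∧
      (∀ x y : ℤ, g x (y + b') = g x y) := by
  rcases lt_or_gt_of_ne hb with h | h
  · refine wang_aux N E S W f hE hN (-a) (-b) (by omega) fun x y => ?_
    rw [← hper]; congr 1 <;> ring
  · exact wang_aux N E S W f hE hN a b h hper

/-- If a Wang tile set `T` (a finite nonempty set of tiles with top/right/bottom/left
edge colors `N, E, S, W` taken in a finite set of colors `C`) admits a valid tiling
of `ℤ²` that is periodic with some period `(a,b) ≠ (0,0)`, then it admits a valid
doubly periodic tiling of `ℤ²`: a valid tiling invariant under the translations by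
`(a',0)` and `(0,b')` for some integers `a', b' > 0`. -/
theorem wang_periodic_implies_doubly_periodic {T C : Type} [Finite T] [Nonempty T]
    [Finite C] (N E S W : T → C) (f : ℤ → ℤ → T)
    (hE : ∀ x y : ℤ, E (f x y) = W (f (x + 1) y))
    (hN : ∀ x y : ℤ, N (f x y) = S (f x (y + 1)))
    (a b : ℤ) (hab : ¬(a = 0 ∧ b = 0))
    (hper : ∀ x y : ℤ, f (x + a) (y + b) = f x y) :
    ∃ g : ℤ → ℤ → T, ∃ a' b' : ℤ, 0 < a' ∧ 0 < b' ∧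
      (∀ x y : ℤ, E (g x y) = W (g (x + 1) y)) ∧
      (∀ x y : ℤ, N (g x y) = S (g x (y + 1))) ∧
      (∀ x y : ℤ, g (x + a') y = g x y) ∧
      (∀ x y : ℤ, g x (y + b') = g x y) := by
  by_cases hb : b = 0
  · obtain ⟨g, a', b', h1, h2, h3, h4, h5, h6⟩ := wang_aux2 E N W S (fun x y => f y x)
      (fun x y => hN y x) (fun x y => hE y x) b a (fun h => hab ⟨h, hb⟩) (fun x y => hper y x)
    exact ⟨fun x y => g y x, b', a', h2, h1, fun x y => h4 y x, fun x y => h3 y x,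
      fun x y => h6 y x, fun x y => h5 y x⟩
  · exact wang_aux2 N E S W f hE hN a b hb hper
end
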